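/- For every n ≥ 1 the dual canonical basis elements satisfy B[n−1,0,0,n] = q^{n−1} B[n−1,0,0,n−1] u₀ − q^{2n−1} B[n−2,1,0,n−1] u₁ = q^{3n−3} u₀ B[n−1,0,0,n−1] − q^{2n−3} u₁ B[n−2,1,0,n−1]. -/

import Mathlib

noncomputable section

abbrev F : Type := RatFunc ℚ

/-- The deformation parameter `q`. -/
def qq : F := RatFunc.X

/-- The quantum integer `[3] = q² + 1 + q⁻²`. -/
def box3 : F := qq ^ 2 + 1 + (qq⁻¹) ^ 2

/-- The generators `E₁, E₂` of the free algebra. -/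
def gen (i : Fin 2) : FreeAlgebra F (Fin 2) := FreeAlgebra.ι F i

/-- The quantized Serre relations. -/
inductive SerreRel : FreeAlgebra F (Fin 2) → FreeAlgebra F (Fin 2) → Prop
  | rel1 : SerreRel
      (gen 0 ^ 3 * gen 1 - box3 • (gen 0 ^ 2 * gen 1 * gen 0)
        + box3 • (gen 0 * gen 1 * gen 0 ^ 2) - gen 1 * gen 0 ^ 3) 0
  | rel2 : SerreRel
      (gen 1 ^ 3 * gen 0 - box3 • (gen 1 ^ 2 * gen 0 * gen 1)
        + box3 • (gen 1 * gen 0 * gen 1 ^ 2) - gen 0 * gen 1 ^ 3) 0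

/-- `U = U_q(𝔫)`, the free algebra on `E₁, E₂` modulo the quantized Serre relations. -/
abbrev U : Type := RingQuot SerreRel

def E1 : U := RingQuot.mkAlgHom F SerreRel (gen 0)
def E2 : U := RingQuot.mkAlgHom F SerreRel (gen 1)

/-- `A = (1/(q+q⁻¹))(E₂E₁ − q⁻²E₁E₂)`. -/
def Aelt : U := (qq + qq⁻¹)⁻¹ • (E2 * E1 - (qq⁻¹) ^ 2 • (E1 * E2))

def v0 : U := E1
def v1 : U := Aelt * v0 - v0 * Aelt
def v2 : U := Aelt * v1 - v1 * Aelt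
def v3 : U := Aelt * v2 - v2 * Aelt

/-- `uᵢ = (1 − q⁻²)⁻²ⁱ vᵢ`. -/
def u0 : U := v0
def u1 : U := ((1 - (qq⁻¹) ^ 2)⁻¹) ^ 2 • v1
def u2 : U := ((1 - (qq⁻¹) ^ 2)⁻¹) ^ 4 • v2
def u3 : U := ((1 - (qq⁻¹) ^ 2)⁻¹) ^ 6 • v3

/-- `p₁ = u₃u₁ − q²u₂²`. -/
def p1 : U := u3 * u1 - qq ^ 2 • u2 ^ 2
/-- `p₀ = u₂u₀ − q²u₁²`. -/
def p0 : U := u2 * u0 - qq ^ 2 • u1 ^ 2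

/-- `S`, the subalgebra of `U` generated by `u₀, u₁, u₂, u₃`. -/
abbrev Sgen : Subalgebra F U := Algebra.adjoin F ({u0, u1, u2, u3} : Set U)

def us0 : Sgen := ⟨u0, Algebra.subset_adjoin (by simp)⟩
def us1 : Sgen := ⟨u1, Algebra.subset_adjoin (by simp)⟩
def us2 : Sgen := ⟨u2, Algebra.subset_adjoin (by simp)⟩
def us3 : Sgen := ⟨u3, Algebra.subset_adjoin (by simp)⟩

/-- `p₁ = u₃u₁ − q²u₂²` as an element of `S`. -/
def ps1 : Sgen := us3 * us1 - qq ^ 2 • us2 ^ 2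
/-- `p₀ = u₂u₀ − q²u₁²` as an element of `S`. -/
def ps0 : Sgen := us2 * us0 - qq ^ 2 • us1 ^ 2

/-- Index quadruples `a = (a₃, a₂, a₁, a₀)`. -/
abbrev Idx : Type := ℕ × ℕ × ℕ × ℕ

/-- The PBW monomial `u₃^{a₃}u₂^{a₂}u₁^{a₁}u₀^{a₀}`. -/
def mon (a : Idx) : Sgen := us3 ^ a.1 * us2 ^ a.2.1 * us1 ^ a.2.2.1 * us0 ^ a.2.2.2

/-- `b(a) = C(a₃,2)+C(a₂,2)+C(a₁,2)+C(a₀,2)`. -/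
def bexp (a : Idx) : ℕ :=
  Nat.choose a.1 2 + Nat.choose a.2.1 2 + Nat.choose a.2.2.1 2 + Nat.choose a.2.2.2 2

/-- The dual PBW basis element `E[a] = q^{b(a)} u₃^{a₃}u₂^{a₂}u₁^{a₁}u₀^{a₀}`. -/
def Ee (a : Idx) : Sgen := qq ^ bexp a • mon a

/-- `N(a) = (a₃+a₂+a₁+a₀)² − 7a₃ − 5a₂ − 3a₁ − a₀`. -/
def Nnum (a : Idx) : ℤ :=
  ((a.1 : ℤ) + a.2.1 + a.2.2.1 + a.2.2.2) ^ 2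
    - 7 * a.1 - 5 * a.2.1 - 3 * a.2.2.1 - a.2.2.2

/-- `a ⊴ b` iff `b − a ∈ ℕ·(−1,2,−1,0) + ℕ·(0,−1,2,−1)`. -/
def tri (a b : Idx) : Prop :=
  ∃ s r : ℕ,
    (b.1 : ℤ) = a.1 - s ∧
    (b.2.1 : ℤ) = a.2.1 + 2 * s - r ∧
    (b.2.2.1 : ℤ) = a.2.2.1 - s + 2 * r ∧
    (b.2.2.2 : ℤ) = a.2.2.2 - r

/-- `S(a) = {b ∈ ℕ⁴ : a ⊴ b and a ≠ b}`. -/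
def Sset (a : Idx) : Set Idx := {b | tri a b ∧ a ≠ b}

/-- Condition (i): `B[a] − E[a] ∈ Σ_{b ∈ S(a)} qℤ[q]·E[b]`. -/
def cond1 (B : Idx → Sgen) (a : Idx) : Prop :=
  ∃ φ : Idx →₀ Polynomial ℤ,
    (↑φ.support : Set Idx) ⊆ Sset a ∧
    B a - Ee a =
      φ.sum fun b p => (qq * Polynomial.eval₂ (Int.castRingHom F) qq p) • Ee b

/-- Hypotheses on the bar involution of coefficients `bar : q ↦ q⁻¹` and on the
anti-automorphism `σ` of `S`: `σ` is an additive, anti-multiplicative bijection with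
`σ(c(q)·x) = c(q⁻¹)·σ(x)` and `σ(uᵢ) = q^{2i}uᵢ`. -/
def SigmaHyp (bar : F →+* F) (σ : Sgen → Sgen) : Prop :=
  bar qq = qq⁻¹ ∧
  Function.Bijective σ ∧
  (∀ x y : Sgen, σ (x + y) = σ x + σ y) ∧
  (∀ x y : Sgen, σ (x * y) = σ y * σ x) ∧
  (∀ (c : F) (x : Sgen), σ (c • x) = bar c • σ x) ∧
  σ us0 = us0 ∧ σ us1 = qq ^ 2 • us1 ∧ σ us2 = qq ^ 4 • us2 ∧ σ us3 = qq ^ 6 • us3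

/-- The defining properties of the dual canonical basis `B`: for every `a ∈ ℕ⁴`,
`B[a] − E[a] ∈ Σ_{b ∈ S(a)} qℤ[q]·E[b]` and `σ(B[a]) = q^{−N(a)}B[a]`. -/
def DCB (bar : F →+* F) (σ : Sgen → Sgen) (B : Idx → Sgen) : Prop :=
  ∀ a : Idx, cond1 B a ∧ σ (B a) = qq ^ (-Nnum a) • B a

/-- Extension of `B` to integer quadruples by the convention that `B[a] = 0` whenever
some coordinate of `a` is negative. -/
def Bz (B : Idx → Sgen) (a : ℤ × ℤ × ℤ × ℤ) : Sgen :=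
  if 0 ≤ a.1 ∧ 0 ≤ a.2.1 ∧ 0 ≤ a.2.2.1 ∧ 0 ≤ a.2.2.2 then
    B (a.1.toNat, a.2.1.toNat, a.2.2.1.toNat, a.2.2.2.toNat)
  else 0

section
variable {K R : Type*} [Field K] [Ring R] [Algebra K R]

theorem gen_serre (q t : K) (hq : q ≠ 0) (ht : t ≠ 0) (x y A : R)
    (hA : t • A = y * x - (q⁻¹) ^ 2 • (x * y))
    (h : x ^ 3 * y - (q ^ 2 + 1 + (q⁻¹) ^ 2) • (x ^ 2 * y * x)
        + (q ^ 2 + 1 + (q⁻¹) ^ 2) • (x * y * x ^ 2) - y * x ^ 3 = 0) :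
    (A * x - x * A) * x = q ^ 2 • (x * (A * x - x * A)) := by
  have hA' : A = t⁻¹ • (y * x - (q⁻¹) ^ 2 • (x * y)) := by
    rw [← hA, smul_smul, inv_mul_cancel₀ ht, one_smul]
  rw [hA']
  linear_combination (norm := skip) (-t⁻¹) • h
  simp only [pow_succ, pow_zero, one_mul, mul_add, add_mul, mul_sub, sub_mul, smul_mul_assoc, mul_smul_comm, smul_add, smul_sub, mul_assoc, smul_zero]
  match_scalars <;> (field_simp; ring)

theorem gen_serre' (q t : K) (hq : q ≠ 0) (ht : t ≠ 0) (x y A : R)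
    (hA : t • A = y * x - (q⁻¹) ^ 2 • (x * y))
    (h : y ^ 3 * x - (q ^ 2 + 1 + (q⁻¹) ^ 2) • (y ^ 2 * x * y)
        + (q ^ 2 + 1 + (q⁻¹) ^ 2) • (y * x * y ^ 2) - x * y ^ 3 = 0) :
    y * (y * A - A * y) = q ^ 2 • ((y * A - A * y) * y) := by
  have hA' : A = t⁻¹ • (y * x - (q⁻¹) ^ 2 • (x * y)) := by
    rw [← hA, smul_smul, inv_mul_cancel₀ ht, one_smul]
  rw [hA']
  linear_combination (norm := skip) (t⁻¹) • h
  simp only [pow_succ, pow_zero, one_mul, mul_add, add_mul, mul_sub, sub_mul, smul_mul_assoc, mul_smul_comm, smul_add, smul_sub, mul_assoc, smul_zero]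
  match_scalars <;> (field_simp; ring)

/-- `[A₂, x]` -/
theorem gen_A2x (q t : K) (hq : q ≠ 0) (x y A v A2 : R)
    (hA : y * x = t • A + (q⁻¹) ^ 2 • (x * y))
    (hv : v = A * x - x * A)
    (hA2 : A2 = y * v - (q⁻¹) ^ 2 • (v * y))
    (h1 : v * x = q ^ 2 • (x * v)) :
    A2 * x - x * A2 = t • (q ^ 2 • (A * v) - (q⁻¹) ^ 2 • (v * A)) := by
  have e1 : y * v = A2 + (q⁻¹) ^ 2 • (v * y) := by rw [hA2]; abel
  have e2 := congrArg (fun s => y * s) h1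
  have e3 := congrArg (fun s => s * y) h1
  have e4 := congrArg (fun s => s * v) hA
  have e5 := congrArg (fun s => s * x) e1
  have e6 := congrArg (fun s => v * s) hA
  have e7 := congrArg (fun s => x * s) e1
  linear_combination (norm := skip) e2 - (q⁻¹)^4 • e3 + q^2 • e4 - e5 + e7 - (q⁻¹)^2 • e6
  simp only [pow_succ, pow_zero, one_mul, mul_add, add_mul, mul_sub, sub_mul, smul_mul_assoc, mul_smul_comm, smul_add, smul_sub, mul_assoc, smul_zero]
  match_scalars <;> (field_simp; try ring)

theorem gen_yA2 (q t : K) (hq : q ≠ 0) (x y A w A2 : R)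
    (hA : y * x = t • A + (q⁻¹) ^ 2 • (x * y))
    (hA2 : A2 = w * x - (q⁻¹) ^ 2 • (x * w))
    (h1 : y * w = q ^ 2 • (w * y)) :
    y * A2 - A2 * y = t • (q ^ 2 • (w * A) - (q⁻¹) ^ 2 • (A * w)) := by
  have e1 : w * x = A2 + (q⁻¹) ^ 2 • (x * w) := by rw [hA2]; abel
  have e2 := congrArg (fun s => s * x) h1
  have e3 := congrArg (fun s => x * s) h1
  have e4 := congrArg (fun s => w * s) hA
  have e5 := congrArg (fun s => y * s) e1
  have e6 := congrArg (fun s => s * w) hA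
  have e7 := congrArg (fun s => s * y) e1
  linear_combination (norm := skip) e2 - (q⁻¹)^4 • e3 + q^2 • e4 - e5 + e7 - (q⁻¹)^2 • e6
  simp only [pow_succ, pow_zero, one_mul, mul_add, add_mul, mul_sub, sub_mul, smul_mul_assoc, mul_smul_comm, smul_add, smul_sub, mul_assoc, smul_zero]
  match_scalars <;> (field_simp; try ring)

theorem gen_A2eq (q t : K) (x y A v w : R)
    (hA : y * x = t • A + (q⁻¹) ^ 2 • (x * y))
    (hv : v = A * x - x * A) (hw : w = y * A - A * y) :
    y * v - (q⁻¹) ^ 2 • (v * y) = w * x - (q⁻¹) ^ 2 • (x * w) := by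
  have e1 := congrArg (fun s => A * s) hA
  have e2 := congrArg (fun s => s * A) hA
  rw [hv, hw]
  linear_combination (norm := skip) e1 - e2
  simp only [pow_succ, pow_zero, one_mul, mul_add, add_mul, mul_sub, sub_mul, smul_mul_assoc, mul_smul_comm, smul_add, smul_sub, mul_assoc, smul_zero]
  match_scalars <;> ring

theorem gen_comm (q t : K) (hq : q ≠ 0) (ht : t ≠ 0) (h3 : q ^ 2 + 1 + (q⁻¹) ^ 2 ≠ 0)
    (x y A v w A2 : R)
    (hA : y * x = t • A + (q⁻¹) ^ 2 • (x * y))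
    (hv : v = A * x - x * A) (hw : w = y * A - A * y)
    (hA2 : A2 = y * v - (q⁻¹) ^ 2 • (v * y))
    (h1 : v * x = q ^ 2 • (x * v)) (h2 : y * w = q ^ 2 • (w * y)) :
    A * A2 = A2 * A := by
  have hA2' : A2 = w * x - (q⁻¹) ^ 2 • (x * w) := by rw [hA2]; exact gen_A2eq q t x y A v w hA hv hw
  have a1 := gen_A2x q t hq x y A v A2 hA hv hA2 h1
  have a2 := gen_yA2 q t hq x y A w A2 hA hA2' h2
  have e1 := congrArg (fun s => s * A2) hA
  have e2 := congrArg (fun s => A2 * s) hA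
  have e3 := congrArg (fun s => y * s) a1
  have e4 := congrArg (fun s => s * x) a2
  have e5 := congrArg (fun s => x * s) a2
  have e6 := congrArg (fun s => s * y) a1
  have f1 := congrArg (fun s => A * s) hA2
  have f2 := congrArg (fun s => s * A) hA2
  have f3 := congrArg (fun s => A * s) hA2'
  have f4 := congrArg (fun s => s * A) hA2'
  have key : (t * (q ^ 2 + 1 + (q⁻¹) ^ 2)) • (A * A2 - A2 * A) = 0 := by
    linear_combination (norm := skip) e2 - e1 - e3 + e4 - (q⁻¹)^2 • e5 + (q⁻¹)^2 • e6 + (t * q^2) • f1 + (t*(q⁻¹)^2) • f3 - (t * q^2) • f4 - (t*(q⁻¹)^2) • f2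
    rw [hv, hw]
    simp only [pow_succ, pow_zero, one_mul, mul_add, add_mul, mul_sub, sub_mul, smul_mul_assoc, mul_smul_comm, smul_add, smul_sub, mul_assoc, smul_zero]
    match_scalars <;> (field_simp; try ring)
  have := (smul_eq_zero.1 key).resolve_left (mul_ne_zero ht h3)
  exact sub_eq_zero.1 this


theorem gen_shift [CharZero K] (q k : K) (d e : R → R)
    (hd : ∀ a b, d (a * b) = d a * b + a * d b)
    (hds : ∀ (c : K) a, d (c • a) = c • d a)
    (he : ∀ a b, e (a * b) = e a * b + a * e b)
    (hes : ∀ (c : K) a, e (c • a) = c • e a)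
    (hda : ∀ a b, d (a + b) = d a + d b)
    (hk : k ≠ 0) (a b c f : R) (hab : d a = b) (hbc : d b = c) (hcf : d c = f)
    (hea : e a = k • c) (heb : e b = k • f)
    (h : b * a = q ^ 2 • (a * b)) :
    c * b = q ^ 2 • (b * c) ∧ c * a = q ^ 2 • (a * c) + (q ^ 2 - 1) • (b * b) ∧
    f * a = q ^ 2 • (a * f) + (q ^ 4 - 1) • (b * c) := by
  have h1 := congrArg d h
  simp only [hd, hds, hab, hbc] at h1
  have h2 := congrArg d h1
  simp only [hd, hds, hab, hbc, hcf, hda] at h2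
  have h3 := congrArg e h
  simp only [he, hes, hea, heb, hab, hbc] at h3
  have hcb : c * b = q ^ 2 • (b * c) := by
    have h4 : (2 : K) • (c * b) = (2 : K) • (q ^ 2 • (b * c)) := by
      linear_combination (norm := skip) h2 - k⁻¹ • h3
      simp only [pow_succ, pow_zero, one_mul, mul_add, add_mul, mul_sub, sub_mul, smul_mul_assoc, mul_smul_comm, smul_add, smul_sub, mul_assoc, smul_zero]
      match_scalars <;> (field_simp; try ring)
    have := congrArg (fun s => (2 : K)⁻¹ • s) h4
    simpa [smul_smul] using this
  refine ⟨hcb, ?_, ?_⟩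
  · linear_combination (norm := module) h1
  · linear_combination (norm := skip) k⁻¹ • h3 + q ^ 2 • hcb
    simp only [mul_add, add_mul, mul_sub, sub_mul, smul_mul_assoc, mul_smul_comm, smul_add, smul_sub, mul_assoc, smul_zero]
    match_scalars <;> (field_simp; try ring)

/-- The six straightening relations. -/
def Rels (q : K) (a b c d : R) : Prop :=
  (b * a = q ^ 2 • (a * b)) ∧ (c * b = q ^ 2 • (b * c)) ∧ (d * c = q ^ 2 • (c * d)) ∧
  (c * a = q ^ 2 • (a * c) + (q ^ 2 - 1) • (b * b)) ∧
  (d * b = q ^ 2 • (b * d) + (q ^ 2 - 1) • (c * c)) ∧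
  (d * a = q ^ 2 • (a * d) + (q ^ 4 - 1) • (b * c))

theorem rels_of_serre [CharZero K] (q t : K) (hq : q ≠ 0) (htt : t = q + q⁻¹) (ht : t ≠ 0)
    (h3 : q ^ 2 + 1 + (q⁻¹) ^ 2 ≠ 0) (h4 : q ^ 2 + (q⁻¹) ^ 2 ≠ 0) (x y A v w f : R)
    (hA : t • A = y * x - (q⁻¹) ^ 2 • (x * y))
    (s1 : x ^ 3 * y - (q ^ 2 + 1 + (q⁻¹) ^ 2) • (x ^ 2 * y * x)
        + (q ^ 2 + 1 + (q⁻¹) ^ 2) • (x * y * x ^ 2) - y * x ^ 3 = 0)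
    (s2 : y ^ 3 * x - (q ^ 2 + 1 + (q⁻¹) ^ 2) • (y ^ 2 * x * y)
        + (q ^ 2 + 1 + (q⁻¹) ^ 2) • (y * x * y ^ 2) - x * y ^ 3 = 0)
    (hv : v = A * x - x * A) (hw : w = A * v - v * A) (hf : f = A * w - w * A) :
    Rels q x v w f := by
  have r1 := gen_serre q t hq ht x y A hA s1
  have r2 := gen_serre' q t hq ht x y A hA s2
  rw [← hv] at r1
  have hA' : y * x = t • A + (q⁻¹) ^ 2 • (x * y) := by rw [hA]; abel
  set A2 := y * v - (q⁻¹) ^ 2 • (v * y) with hA2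
  have cm := gen_comm q t hq ht h3 x y A v _ A2 hA' hv rfl hA2 r1 r2
  have ax := gen_A2x q t hq x y A v A2 hA' hv hA2 r1
  set k : K := t * (q ^ 2 + (q⁻¹) ^ 2) / 2 with hk
  have hk0 : k ≠ 0 := by
    rw [hk]; exact div_ne_zero (mul_ne_zero ht h4) two_ne_zero
  set A3 := A2 - (t * (q ^ 2 - (q⁻¹) ^ 2) / 2) • (A * A) with hA3
  have cm3 : A * A3 = A3 * A := by
    rw [hA3, mul_sub, sub_mul, cm, mul_smul_comm, smul_mul_assoc, mul_assoc]
  have ex : A3 * x - x * A3 = k • w := by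
    rw [hA3, hk, hw]
    linear_combination (norm := skip) ax
    rw [hv]
    simp only [pow_succ, pow_zero, one_mul, mul_add, add_mul, mul_sub, sub_mul, smul_mul_assoc, mul_smul_comm, smul_add, smul_sub, mul_assoc, smul_zero]
    match_scalars <;> (field_simp; try ring)
  -- general: commutes past D
  have step : ∀ a c : R, A3 * a - a * A3 = k • c →
      A3 * (A * a - a * A) - (A * a - a * A) * A3 = k • (A * c - c * A) := by
    intro a c h
    have e1 := congrArg (fun s => A * s) h
    have e2 := congrArg (fun s => s * A) h
    have e3 := congrArg (fun s => s * a) cm3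
    have e4 := congrArg (fun s => a * s) cm3
    linear_combination (norm := skip) e1 - e2 - e3 + e4
    simp only [mul_add, add_mul, mul_sub, sub_mul, smul_mul_assoc, mul_smul_comm, smul_add, smul_sub, mul_assoc, smul_zero]
    match_scalars <;> (try field_simp; try ring)
  have ev : A3 * v - v * A3 = k • f := by
    have := step _ _ ex
    rwa [← hv, ← hf] at this
  have ew := step _ _ ev
  rw [← hw] at ew
  have der : ∀ T a b : R, T * (a * b) - (a * b) * T = (T * a - a * T) * b + a * (T * b - b * T) := by
    intros; noncomm_ring
  have dsm : ∀ (T : R) (c : K) (a : R), T * (c • a) - (c • a) * T = c • (T * a - a * T) := by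
    intros; simp [smul_sub]
  have dad : ∀ T a b : R, T * (a + b) - (a + b) * T = (T * a - a * T) + (T * b - b * T) := by
    intros; noncomm_ring
  obtain ⟨g1, g2, g3⟩ := gen_shift q k (fun s => A * s - s * A) (fun s => A3 * s - s * A3)
    (der A) (dsm A) (der A3) (dsm A3) (dad A) hk0 x v w f hv.symm hw.symm hf.symm ex ev r1
  obtain ⟨g4, g5, g6⟩ := gen_shift q k (fun s => A * s - s * A) (fun s => A3 * s - s * A3)
    (der A) (dsm A) (der A3) (dsm A3) (dad A) hk0 v w f _ hw.symm hf.symm rfl ev ew g1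
  exact ⟨r1, g1, g4, g2, g5, g3⟩

theorem Rels.scale {q : K} {a b c d : R} (h : Rels q a b c d) (k : K) :
    Rels q a (k • b) (k ^ 2 • c) (k ^ 3 • d) := by
  obtain ⟨h1, h2, h3, h4, h5, h6⟩ := h
  refine ⟨?_, ?_, ?_, ?_, ?_, ?_⟩ <;>
    simp only [smul_mul_assoc, mul_smul_comm, h1, h2, h3, h4, h5, h6] <;> module

theorem Rels.map {R' : Type*} [Ring R'] [Algebra K R'] {q : K} {a b c d : R} (φ : R →ₐ[K] R')
    (hφ : Function.Injective φ)
    (h : Rels q (φ a) (φ b) (φ c) (φ d)) : Rels q a b c d := by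
  obtain ⟨h1, h2, h3, h4, h5, h6⟩ := h
  refine ⟨?_, ?_, ?_, ?_, ?_, ?_⟩ <;> apply hφ <;> simpa

theorem Rels.rules {q : K} (hq : q ≠ 0) {a b c d : R} (h : Rels q a b c d) :
    (a * b = (q⁻¹)^2 • (b * a)) ∧ (b * c = (q⁻¹)^2 • (c * b)) ∧ (c * d = (q⁻¹)^2 • (d * c)) ∧
    (a * c = (q⁻¹)^2 • (c * a) - (1 - (q⁻¹)^2) • (b * b)) ∧
    (b * d = (q⁻¹)^2 • (d * b) - (1 - (q⁻¹)^2) • (c * c)) ∧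
    (a * d = (q⁻¹)^2 • (d * a) - (1 - (q⁻¹)^4) • (c * b)) := by
  obtain ⟨h1, h2, h3, h4, h5, h6⟩ := h
  refine ⟨?_, ?_, ?_, ?_, ?_, ?_⟩
  · rw [h1]; match_scalars; field_simp
  · rw [h2]; match_scalars; field_simp
  · rw [h3]; match_scalars; field_simp
  · rw [h4]; match_scalars <;> field_simp <;> ring
  · rw [h5]; match_scalars <;> field_simp <;> ring
  · rw [h6, h2]; match_scalars <;> field_simp <;> ring

theorem assoc_rule {x y w : R} (h : x * y = w) (s : R) : x * (y * s) = w * s := by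
  rw [← mul_assoc, h]

/-- Commutation facts about `p₀`, `p₁`, `z`. -/
structure Facts (q : K) (a b c d p p' z : R) : Prop where
  pa : p * a = q ^ 2 • (a * p)
  pb : p * b = b * p
  pc : p * c = (q⁻¹) ^ 2 • (c * p)
  pd : p * d = (q⁻¹) ^ 4 • (d * p)
  pa' : p' * a = q ^ 4 • (a * p')
  pb' : p' * b = q ^ 2 • (b * p')
  pc' : p' * c = c * p'
  pd' : p' * d = (q⁻¹) ^ 2 • (d * p')
  hz : z = d * a - q ^ 2 • (c * b)
  za : z * a = q ^ 2 • (a * z) + (q ^ 2 - 1) • (p * b)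
  zb : z * b = q ^ 2 • (b * z) - (1 - (q⁻¹) ^ 2) • (p' * a)
  base : z * z - q ^ 2 • (p * p') = (q⁻¹) ^ 2 • (d * (z * a - q ^ 2 • (p * b))) - c * (p' * a)

theorem Rels.facts {q : K} (hq : q ≠ 0) {a b c d : R} (h : Rels q a b c d) :
    Facts q a b c d (c * a - q ^ 2 • b ^ 2) (d * b - q ^ 2 • c ^ 2) (d * a - q ^ 2 • (c * b)) := by
  obtain ⟨h1, h2, h3, h4, h5, h6⟩ := h.rules hq
  have g1 := assoc_rule h1
  have g2 := assoc_rule h2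
  have g3 := assoc_rule h3
  have g4 := assoc_rule h4
  have g5 := assoc_rule h5
  have g6 := assoc_rule h6
  constructor
  all_goals try rfl
  all_goals
    simp only [h1, h2, h3, h4, h5, h6, g1, g2, g3, g4, g5, g6, pow_succ, pow_zero, one_mul, mul_add, add_mul, mul_sub, sub_mul, smul_mul_assoc, mul_smul_comm, smul_add, smul_sub, mul_assoc, smul_zero]
    try (match_scalars <;> field_simp <;> ring)

theorem Facts.more {q : K} (hq : q ≠ 0) {a b c d p p' z : R} (h : Facts q a b c d p p' z) :
    p * z = (q⁻¹) ^ 2 • (z * p) ∧ p' * z = q ^ 2 • (z * p') := by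
  have g1 := assoc_rule h.pa
  have g2 := assoc_rule h.pb
  have g3 := assoc_rule h.pc
  have g4 := assoc_rule h.pd
  have g5 := assoc_rule h.pa'
  have g6 := assoc_rule h.pb'
  have g7 := assoc_rule h.pc'
  have g8 := assoc_rule h.pd'
  rw [h.hz]
  constructor
  all_goals
    simp only [h.pa, h.pb, h.pc, h.pd, h.pa', h.pb', h.pc', h.pd', g1, g2, g3, g4, g5, g6, g7, g8, mul_add, add_mul, mul_sub, sub_mul, smul_mul_assoc, mul_smul_comm, smul_add, smul_sub, mul_assoc, smul_zero]
    try (match_scalars <;> field_simp)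

theorem Rels.pp {q : K} (hq : q ≠ 0) {a b c d p p' z : R} (h : Facts q a b c d p p' z)
    (hp : p = c * a - q ^ 2 • b ^ 2) : p' * p = q ^ 4 • (p * p') := by
  have g5 := assoc_rule h.pa'
  have g6 := assoc_rule h.pb'
  have g7 := assoc_rule h.pc'
  rw [hp]
  simp only [h.pa', h.pb', h.pc', g5, g6, g7, pow_succ, pow_zero, one_mul, mul_add, add_mul, mul_sub, sub_mul, smul_mul_assoc, mul_smul_comm, smul_add, smul_sub, mul_assoc, smul_zero]
  match_scalars <;> field_simp

/-- Chebyshev-type sequence. -/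
def zeta (q : K) (p p' z : R) : ℕ → R
  | 0 => 1
  | 1 => z
  | n + 2 => z * zeta q p p' z (n + 1) - q ^ 2 • (p * p' * zeta q p p' z n)

def xi (q : K) (a b p p' z : R) : ℕ → R
  | 0 => a
  | n + 1 => zeta q p p' z (n + 1) * a - q ^ 2 • (zeta q p p' z n * p * b)

def wseq (q : K) (a b p p' z : R) : ℕ → R
  | 0 => b
  | n + 1 => p' * xi q a b p p' z n

section
variable {q : K} {a b c d p p' z : R}

theorem PzComm (hq : q ≠ 0) (h : Facts q a b c d p p' z) : p * p' * z = z * (p * p') := by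
  obtain ⟨h1, h2⟩ := h.more hq
  rw [mul_assoc, h2, mul_smul_comm, ← mul_assoc, h1, smul_mul_assoc, smul_smul, mul_assoc]
  have : q ^ 2 * q⁻¹ ^ 2 = 1 := by field_simp
  rw [this, one_smul]

theorem zeta_comm (hq : q ≠ 0) (h : Facts q a b c d p p' z) (s : R) (hz : s * z = z * s)
    (hP : s * (p * p') = (p * p') * s) : ∀ n, s * zeta q p p' z n = zeta q p p' z n * s := by
  intro n
  induction n using Nat.twoStepInduction with
  | zero => simp [zeta]
  | one => exact hz
  | more n h1 h2 =>
    have e1 : s * (z * zeta q p p' z (n+1)) = z * zeta q p p' z (n+1) * s := by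
      rw [← mul_assoc, hz, mul_assoc, h2, mul_assoc]
    have e2 : s * (p * p' * zeta q p p' z n) = p * p' * zeta q p p' z n * s := by
      rw [← mul_assoc, hP, mul_assoc, h1]; simp only [mul_assoc]
    rw [zeta, mul_sub, sub_mul, mul_smul_comm, smul_mul_assoc, e1, e2]

theorem zeta_right (hq : q ≠ 0) (h : Facts q a b c d p p' z) (n : ℕ) :
    zeta q p p' z (n + 2) = zeta q p p' z (n + 1) * z - q ^ 2 • (zeta q p p' z n * (p * p')) := by
  have hP := PzComm hq h
  rw [zeta, zeta_comm hq h z rfl hP.symm, zeta_comm hq h (p * p') hP rfl]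

theorem p_zeta (hq : q ≠ 0) (h : Facts q a b c d p p' z) (hpp : p' * p = q ^ 4 • (p * p')) :
    ∀ n, zeta q p p' z n * p = q ^ (2 * n) • (p * zeta q p p' z n) := by
  obtain ⟨h1, h2⟩ := h.more hq
  have h1' : z * p = q ^ 2 • (p * z) := by
    rw [h1, smul_smul]
    have : q ^ 2 * q⁻¹ ^ 2 = 1 := by field_simp
    rw [this, one_smul]
  intro n
  induction n using Nat.twoStepInduction with
  | zero => simp [zeta]
  | one => simpa [zeta] using h1'
  | more n i1 i2 =>
    have g1 := assoc_rule h1'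
    have g2 := assoc_rule hpp
    simp only [zeta, sub_mul, smul_mul_assoc, mul_assoc, i1, i2, mul_smul_comm, mul_sub, g1, g2]
    match_scalars <;> ring

theorem xi_left (n : ℕ) : xi q a b p p' z (n + 2)
    = z * xi q a b p p' z (n + 1) - q ^ 2 • (p * p' * xi q a b p p' z n) := by
  cases n with
  | zero =>
    simp only [xi, zeta, mul_sub, sub_mul, smul_mul_assoc, mul_smul_comm, mul_assoc, one_mul, mul_one]
    module
  | succ n =>
    simp only [xi, zeta, mul_sub, sub_mul, smul_mul_assoc, mul_smul_comm, mul_assoc, one_mul, mul_one, smul_sub]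
    module

theorem P_xi (hq : q ≠ 0) (h : Facts q a b c d p p' z) (hpp : p' * p = q ^ 4 • (p * p')) :
    ∀ n, p * p' * xi q a b p p' z n = q ^ 6 • (xi q a b p p' z n * (p * p')) := by
  intro n
  obtain ⟨h1, h2⟩ := h.more hq
  have hP := PzComm hq h
  have ha : p * p' * a = q ^ 6 • (a * (p * p')) := by
    rw [mul_assoc, h.pa', mul_smul_comm, ← mul_assoc, h.pa, smul_mul_assoc, smul_smul, mul_assoc]
    congr 1; ring
  have hb : p * p' * (p * b) = q ^ 6 • (p * b * (p * p')) := by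
    have g2 := assoc_rule hpp
    have g3 := assoc_rule h.pb
    simp only [mul_assoc, g2, h.pb', mul_smul_comm, smul_mul_assoc, g3]
    match_scalars; ring
  cases n with
  | zero => exact ha
  | succ n =>
    have e := fun k => zeta_comm hq h (p * p') hP rfl k
    have e1 : p * p' * (zeta q p p' z (n+1) * a) = zeta q p p' z (n+1) * (p * p' * a) := by
      rw [← mul_assoc, e, mul_assoc]
    have e2 : p * p' * (zeta q p p' z n * p * b) = zeta q p p' z n * (p * p' * (p * b)) := by
      rw [mul_assoc (zeta q p p' z n), ← mul_assoc, e, mul_assoc]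
    rw [xi, mul_sub, mul_smul_comm, e1, e2, ha, hb]
    simp only [sub_mul, smul_mul_assoc, mul_smul_comm, mul_assoc]
    module

theorem xi_comm (hq : q ≠ 0) (h : Facts q a b c d p p' z) (hpp : p' * p = q ^ 4 • (p * p')) :
    ∀ n, z * xi q a b p p' z (n+1) - q ^ 2 • (xi q a b p p' z (n+1) * z)
      = (q ^ 2 - 1) • (p * p' * xi q a b p p' z n) := by
  obtain ⟨h1, h2⟩ := h.more hq
  have hP := PzComm hq h
  have h1' : z * p = q ^ 2 • (p * z) := by
    rw [h1, smul_smul]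
    have : q ^ 2 * q⁻¹ ^ 2 = 1 := by field_simp
    rw [this, one_smul]
  have hx1 : xi q a b p p' z 1 = z * a - q ^ 2 • (p * b) := by simp [xi, zeta]
  have b1 : z * xi q a b p p' z 1 - q ^ 2 • (xi q a b p p' z 1 * z)
      = (q ^ 2 - 1) • (p * p' * a) := by
    have g1 := assoc_rule h1'
    rw [hx1]
    have f1 := congrArg (fun s => z * s) h.za
    have f2 := congrArg (fun s => p * s) h.zb
    linear_combination (norm := skip) f1 - q ^ 2 • f2
    simp only [mul_add, add_mul, mul_sub, sub_mul, smul_mul_assoc, mul_smul_comm, smul_add, smul_sub, mul_assoc, smul_zero, g1]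
    match_scalars <;> field_simp <;> ring
  intro n
  induction n using Nat.twoStepInduction with
  | zero => exact b1
  | one =>
    rw [xi_left 0, hx1]
    have f1 := congrArg (fun s => z * s) b1
    have f2 := congrArg (fun s => p * p' * s) h.za
    have f3 := congrArg (fun s => s * a) hP
    simp only [hx1] at f1
    have g4 := assoc_rule hpp
    simp only [xi]
    linear_combination (norm := skip) f1 - q ^ 2 • f2 + (1 : K) • f3
    simp only [mul_add, add_mul, mul_sub, sub_mul, smul_mul_assoc, mul_smul_comm, smul_add, smul_sub, mul_assoc, smul_zero]
    match_scalars <;> field_simp <;> ring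
  | more n i1 i2 =>
    have f1 := congrArg (fun s => z * s) i2
    have f2 := congrArg (fun s => p * p' * s) i1
    have f3 := congrArg (fun s => s * xi q a b p p' z (n+1)) hP
    have L3 := xi_left (q := q) (a := a) (b := b) (p := p) (p' := p') (z := z) (n+1)
    have L2 := xi_left (q := q) (a := a) (b := b) (p := p) (p' := p') (z := z) n
    simp only [show n + 2 + 1 = n + 3 from rfl, show n + 1 + 1 = n + 2 from rfl, show n + 1 + 2 = n + 3 from rfl] at *
    have K1 := congrArg (fun s => z * s) L3
    have K2 := congrArg (fun s => s * z) L3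
    have K3 := congrArg (fun s => p * p' * s) L2
    linear_combination (norm := skip) f1 - q ^ 2 • f2 + K1 - q ^ 2 • K2 - (q ^ 2 - 1) • K3 + (1:K) • f3
    simp only [mul_add, add_mul, mul_sub, sub_mul, smul_mul_assoc, mul_smul_comm, smul_add, smul_sub, mul_assoc, smul_zero]
    match_scalars <;> ring
theorem xi_right (hq : q ≠ 0) (h : Facts q a b c d p p' z) (hpp : p' * p = q ^ 4 • (p * p'))
    (n : ℕ) : xi q a b p p' z (n + 2)
    = q ^ 2 • (xi q a b p p' z (n + 1) * z) - q ^ 6 • (xi q a b p p' z n * (p * p')) := by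
  have h1 := xi_left (q := q) (a := a) (b := b) (p := p) (p' := p') (z := z) n
  have h2 := xi_comm hq h hpp n
  have h3 := P_xi hq h hpp n
  linear_combination (norm := module) h1 + h2 - h3

theorem xi_one_eq (h : Facts q a b c d p p' z) :
    xi q a b p p' z 1 = q ^ 2 • (a * z) - b * p := by
  have := h.za
  simp only [xi, zeta, one_mul]
  rw [← h.pb]
  linear_combination (norm := module) this

theorem xi_other (hq : q ≠ 0) (h : Facts q a b c d p p' z) (hpp : p' * p = q ^ 4 • (p * p'))
    (n : ℕ) : xi q a b p p' z (n + 1)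
    = q ^ (2 * n + 2) • (a * zeta q p p' z (n + 1)) - q ^ (2 * n) • (b * p * zeta q p p' z n) := by
  induction n using Nat.twoStepInduction with
  | zero => rw [xi_one_eq h]; simp [zeta]
  | one =>
    rw [xi_right hq h hpp 0, xi_one_eq h]
    simp only [xi, zeta_right hq h, zeta, mul_sub, sub_mul, smul_mul_assoc, mul_smul_comm, mul_assoc, one_mul, mul_one, smul_sub]
    module
  | more n i1 i2 =>
    rw [xi_right hq h hpp (n+1), i2, i1, zeta_right hq h (n+1), zeta_right hq h n]
    simp only [mul_sub, sub_mul, smul_mul_assoc, mul_smul_comm, mul_assoc, one_mul, mul_one, smul_sub]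
    module

theorem w_right (hq : q ≠ 0) (h : Facts q a b c d p p' z) (hpp : p' * p = q ^ 4 • (p * p'))
    (n : ℕ) : wseq q a b p p' z (n + 2)
    = q ^ 2 • (wseq q a b p p' z (n + 1) * z) - q ^ 6 • (wseq q a b p p' z n * (p * p')) := by
  cases n with
  | zero =>
    simp only [wseq]
    rw [xi_one_eq h, ← h.pb]
    simp only [xi]
    have g1 := assoc_rule hpp
    have g2 := assoc_rule h.pb
    simp only [g1, h.pb', g2, mul_sub, smul_mul_assoc, mul_smul_comm, mul_assoc]
    module
  | succ n =>
    simp only [wseq]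
    rw [xi_right hq h hpp n]
    simp only [mul_sub, smul_mul_assoc, mul_smul_comm, mul_assoc]

theorem zeta_d (hq : q ≠ 0) (h : Facts q a b c d p p' z) (hpp : p' * p = q ^ 4 • (p * p'))
    (n : ℕ) : zeta q p p' z (n + 1)
    = (q⁻¹) ^ (2 * n) • (d * xi q a b p p' z n)
      - (q ^ 2 * (q⁻¹) ^ (2 * n)) • (c * wseq q a b p p' z n) := by
  induction n using Nat.twoStepInduction with
  | zero => simp [zeta, xi, wseq, h.hz]
  | one =>
    have hh := h.base
    have e : q ^ 2 * (q ^ 2)⁻¹ = 1 := by field_simp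
    simpa [zeta, xi, wseq, e, mul_assoc] using hh
  | more n i1 i2 =>
    rw [zeta_right hq h (n+1), i2, i1, xi_right hq h hpp n, w_right hq h hpp n]
    simp only [mul_sub, sub_mul, smul_mul_assoc, mul_smul_comm, mul_assoc, one_mul, mul_one, smul_sub]
    match_scalars <;> (simp only [mul_add, pow_add, inv_pow, mul_one]; field_simp; try ring)
end
end

theorem aeval_qq_ne (P : Polynomial ℚ) (h : P.eval 1 ≠ 0) : Polynomial.aeval qq P ≠ 0 := by
  have : Polynomial.aeval qq P = algebraMap (Polynomial ℚ) F P := by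
    rw [qq, ← RatFunc.algebraMap_X, Polynomial.aeval_algebraMap_apply, Polynomial.aeval_X_left_apply]
  rw [this]
  intro h0
  rw [map_eq_zero_iff _ (RatFunc.algebraMap_injective ℚ)] at h0
  simp [h0] at h

theorem qq_ne : qq ≠ 0 := RatFunc.X_ne_zero

theorem t_ne : qq + qq⁻¹ ≠ 0 := by
  have := aeval_qq_ne (Polynomial.X ^ 2 + 1) (by norm_num)
  have hq := qq_ne
  intro h
  apply this
  have h' : qq * (qq + qq⁻¹) = 0 := by rw [h, mul_zero]
  simp only [map_add, map_pow, Polynomial.aeval_X, map_one]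
  rw [← h']; field_simp

theorem box_ne : qq ^ 2 + 1 + (qq⁻¹) ^ 2 ≠ 0 := by
  have := aeval_qq_ne (Polynomial.X ^ 4 + Polynomial.X ^ 2 + 1) (by norm_num)
  have hq := qq_ne
  intro h
  apply this
  have h' : qq ^ 2 * (qq ^ 2 + 1 + (qq⁻¹) ^ 2) = 0 := by rw [h, mul_zero]
  simp only [map_add, map_pow, Polynomial.aeval_X, map_one]
  rw [← h']; field_simp

theorem c4_ne : qq ^ 2 + (qq⁻¹) ^ 2 ≠ 0 := by
  have := aeval_qq_ne (Polynomial.X ^ 4 + 1) (by norm_num)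
  have hq := qq_ne
  intro h
  apply this
  have h' : qq ^ 2 * (qq ^ 2 + (qq⁻¹) ^ 2) = 0 := by rw [h, mul_zero]
  simp only [map_add, map_pow, Polynomial.aeval_X, map_one]
  rw [← h']; field_simp

theorem relsU : Rels qq v0 v1 v2 v3 := by
  refine rels_of_serre qq (qq + qq⁻¹) qq_ne rfl t_ne box_ne c4_ne E1 E2 Aelt v1 v2 v3 ?_ ?_ ?_ rfl rfl rfl
  · rw [Aelt, smul_smul, mul_inv_cancel₀ t_ne, one_smul]
  · have := RingQuot.mkAlgHom_rel F SerreRel.rel1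
    simp only [map_add, map_sub, map_mul, map_pow, map_smul, map_zero] at this
    exact this
  · have := RingQuot.mkAlgHom_rel F SerreRel.rel2
    simp only [map_add, map_sub, map_mul, map_pow, map_smul, map_zero] at this
    exact this

theorem relsS : Rels qq us0 us1 us2 us3 := by
  apply Rels.map Sgen.val Subtype.val_injective
  have := relsU.scale (((1 - (qq⁻¹) ^ 2)⁻¹) ^ 2)
  rw [← pow_mul, ← pow_mul] at this
  exact this

theorem factsS : Facts qq us0 us1 us2 us3 ps0 ps1 (us3 * us0 - qq ^ 2 • (us2 * us1)) :=
  relsS.facts qq_ne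

theorem ppS : ps1 * ps0 = qq ^ 4 • (ps0 * ps1) := Rels.pp qq_ne factsS rfl

/-! PBW multiplication -/

theorem pow_comm_right {K R : Type*} [Field K] [Ring R] [Algebra K R] (q : K) {x y : R} (h : x * y = q • (y * x)) (n : ℕ) :
    x ^ n * y = q ^ n • (y * x ^ n) := by
  induction n with
  | zero => simp
  | succ n ih =>
    rw [pow_succ, mul_assoc, h, mul_smul_comm, ← mul_assoc, ih, smul_mul_assoc, smul_smul, mul_assoc]
    congr 1; ring

theorem pow_comm_left {K R : Type*} [Field K] [Ring R] [Algebra K R] (q : K) {x y : R} (h : y * x = q • (x * y)) (n : ℕ) :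
    y * x ^ n = q ^ n • (x ^ n * y) := by
  induction n with
  | zero => simp
  | succ n ih =>
    rw [pow_succ, ← mul_assoc, ih, smul_mul_assoc, mul_assoc, h, mul_smul_comm, smul_smul, mul_assoc, ← pow_succ]

theorem ch2 (n : ℕ) : Nat.choose (n + 1) 2 = Nat.choose n 2 + n := by
  rw [Nat.choose_succ_succ' n 1, Nat.choose_one_right, add_comm]

theorem ch22 (n : ℕ) : Nat.choose (n + 2) 2 = Nat.choose n 2 + 2 * n + 1 := by
  rw [ch2 (n + 1), ch2]; ring

section
variable {K R : Type*} [Field K] [Ring R] [Algebra K R] {q : K} {x0 x1 x2 x3 : R}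

def monR (x0 x1 x2 x3 : R) (a : Idx) : R := x3 ^ a.1 * x2 ^ a.2.1 * x1 ^ a.2.2.1 * x0 ^ a.2.2.2

def EE (q : K) (x0 x1 x2 x3 : R) (a : Idx) : R := q ^ bexp a • monR x0 x1 x2 x3 a

theorem Ee_mul_u0 (hq : q ≠ 0) (hr : Rels q x0 x1 x2 x3) (a b c d : ℕ) :
    EE q x0 x1 x2 x3 ((a, b, c, d) : Idx) * x0 = (q⁻¹) ^ d • EE q x0 x1 x2 x3 ((a, b, c, d + 1) : Idx) := by
  simp only [EE, monR, bexp, ch2, pow_add, pow_one, smul_mul_assoc, mul_assoc]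
  match_scalars; (simp only [pow_add, pow_mul, pow_one, inv_pow]; field_simp; try ring)

theorem u3_mul_Ee (hq : q ≠ 0) (hr : Rels q x0 x1 x2 x3) (a b c d : ℕ) :
    x3 * EE q x0 x1 x2 x3 ((a, b, c, d) : Idx) = (q⁻¹) ^ a • EE q x0 x1 x2 x3 ((a + 1, b, c, d) : Idx) := by
  simp only [EE, monR, bexp, ch2, pow_add, pow_one, smul_mul_assoc, mul_smul_comm, ← mul_assoc, ← pow_succ']
  simp only [← pow_succ]
  match_scalars; (simp only [pow_add, pow_mul, pow_one, inv_pow]; field_simp; try ring)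

theorem Ee_mul_u1 (hq : q ≠ 0) (hr : Rels q x0 x1 x2 x3) (a b c d : ℕ) :
    EE q x0 x1 x2 x3 ((a, b, c, d) : Idx) * x1 = (q⁻¹) ^ (2 * d + c) • EE q x0 x1 x2 x3 ((a, b, c + 1, d) : Idx) := by
  have h := pow_comm_right _ (hr.rules hq).1 d
  simp only [EE, monR, bexp, ch2, smul_mul_assoc, mul_assoc, h, mul_smul_comm, pow_succ x1]
  simp only [pow_add, pow_one]
  match_scalars; (simp only [pow_add, pow_mul, pow_one, inv_pow]; field_simp; try ring)

theorem u2_mul_Ee (hq : q ≠ 0) (hr : Rels q x0 x1 x2 x3) (a b c d : ℕ) :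
    x2 * EE q x0 x1 x2 x3 ((a, b, c, d) : Idx) = (q⁻¹) ^ (2 * a + b) • EE q x0 x1 x2 x3 ((a, b + 1, c, d) : Idx) := by
  have h := assoc_rule (pow_comm_left _ (hr.rules hq).2.2.1 a)
  simp only [EE, monR, bexp, ch2, smul_mul_assoc, mul_assoc, h, mul_smul_comm, pow_succ' x2]
  simp only [pow_add, pow_one]
  match_scalars; (simp only [pow_add, pow_mul, pow_one, inv_pow]; field_simp; try ring)

theorem Ee_mul_p0 (hq : q ≠ 0) (hr : Rels q x0 x1 x2 x3) (a b c d : ℕ) :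
    EE q x0 x1 x2 x3 ((a, b, c, d) : Idx) * (x2 * x0 - q ^ 2 • x1 ^ 2) = (q⁻¹) ^ (b + 2 * c + 3 * d) •
      (EE q x0 x1 x2 x3 ((a, b + 1, c, d + 1) : Idx) - q ^ (1 + b + d) • EE q x0 x1 x2 x3 ((a, b, c + 2, d) : Idx)) := by
  have f := hr.facts hq
  have h0 : x0 ^ d * (x2 * x0 - q ^ 2 • x1 ^ 2) = (q⁻¹ ^ 2) ^ d • ((x2 * x0 - q ^ 2 • x1 ^ 2) * x0 ^ d) := by
    apply pow_comm_right
    rw [f.pa, smul_smul, ← mul_pow, inv_mul_cancel₀ hq, one_pow, one_smul]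
  have h1 : x1 ^ c * (x2 * x0 - q ^ 2 • x1 ^ 2) = (x2 * x0 - q ^ 2 • x1 ^ 2) * x1 ^ c := by
    have := pow_comm_right (1 : K) (x := x1) (y := (x2 * x0 - q ^ 2 • x1 ^ 2)) (by rw [f.pb, one_smul]) c
    simpa using this
  have h2 : x0 * x1 ^ c = (q⁻¹ ^ 2) ^ c • (x1 ^ c * x0) := by
    apply pow_comm_left
    exact (hr.rules hq).1
  have e : EE q x0 x1 x2 x3 ((a, b, c, d) : Idx) * (x2 * x0 - q ^ 2 • x1 ^ 2) = (q ^ bexp ((a, b, c, d) : Idx) * (q⁻¹ ^ 2) ^ d) •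
      (x3 ^ a * x2 ^ b * (x2 * x0 - q ^ 2 • x1 ^ 2) * x1 ^ c * x0 ^ d) := by
    have g1 := assoc_rule h1
    simp only [EE, monR, smul_mul_assoc, mul_assoc, h0, mul_smul_comm, g1]
    match_scalars; ring
  have g2 := assoc_rule h2
  rw [e]
  simp only [EE, monR, bexp, ch2, ch22, sub_mul, mul_sub, mul_assoc, smul_mul_assoc, mul_smul_comm, smul_sub, g2]
  simp only [← mul_assoc, ← pow_succ, ← pow_add]
  simp only [mul_assoc, ← pow_succ', ← pow_add, add_comm 2 c]
  simp only [← mul_assoc]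
  match_scalars <;> (simp only [pow_add, pow_mul, pow_one, inv_pow]; field_simp; try ring)

theorem p1_mul_Ee (hq : q ≠ 0) (hr : Rels q x0 x1 x2 x3) (a b c d : ℕ) :
    (x3 * x1 - q ^ 2 • x2 ^ 2) * EE q x0 x1 x2 x3 ((a, b, c, d) : Idx) = (q⁻¹) ^ (3 * a + 2 * b + c) •
      (EE q x0 x1 x2 x3 ((a + 1, b, c + 1, d) : Idx) - q ^ (1 + a + c) • EE q x0 x1 x2 x3 ((a, b + 2, c, d) : Idx)) := by
  have f := hr.facts hq
  have h0 : (x3 * x1 - q ^ 2 • x2 ^ 2) * x3 ^ a = (q⁻¹ ^ 2) ^ a • (x3 ^ a * (x3 * x1 - q ^ 2 • x2 ^ 2)) := by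
    apply pow_comm_left
    exact f.pd'
  have h1 : (x3 * x1 - q ^ 2 • x2 ^ 2) * x2 ^ b = x2 ^ b * (x3 * x1 - q ^ 2 • x2 ^ 2) := by
    have := pow_comm_left (1 : K) (x := x2) (y := (x3 * x1 - q ^ 2 • x2 ^ 2)) (by rw [f.pc', one_smul]) b
    simpa using this
  have h2 : x2 ^ b * x3 = (q⁻¹ ^ 2) ^ b • (x3 * x2 ^ b) := by
    apply pow_comm_right
    exact (hr.rules hq).2.2.1
  have e : (x3 * x1 - q ^ 2 • x2 ^ 2) * EE q x0 x1 x2 x3 ((a, b, c, d) : Idx) = (q ^ bexp ((a, b, c, d) : Idx) * (q⁻¹ ^ 2) ^ a) •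
      (x3 ^ a * x2 ^ b * (x3 * x1 - q ^ 2 • x2 ^ 2) * x1 ^ c * x0 ^ d) := by
    have g0 := assoc_rule h0
    have g1 := assoc_rule h1
    simp only [EE, monR, smul_mul_assoc, mul_assoc, g0, mul_smul_comm, g1]
    match_scalars; ring
  have g2 := assoc_rule h2
  rw [e]
  simp only [EE, monR, bexp, ch2, ch22, sub_mul, mul_sub, mul_assoc, smul_mul_assoc, mul_smul_comm, smul_sub, g2]
  simp only [← mul_assoc, ← pow_succ, ← pow_add]
  simp only [mul_assoc, ← pow_succ', ← pow_add]
  simp only [← mul_assoc]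
  match_scalars <;> (simp only [pow_add, pow_mul, pow_one, inv_pow]; field_simp; try ring)

end
section
variable {K R : Type*} [Field K] [Ring R] [Algebra K R] {q : K} {x0 x1 x2 x3 : R}

def LL (q : K) (x0 x1 x2 x3 : R) (a : Idx) : AddSubgroup R :=
  AddSubgroup.closure {y | ∃ b ∈ Sset a, ∃ m : ℕ, y = q ^ (m + 1) • EE q x0 x1 x2 x3 b}

def Tri (q : K) (x0 x1 x2 x3 : R) (a : Idx) (x : R) : Prop :=
  x - EE q x0 x1 x2 x3 a ∈ LL q x0 x1 x2 x3 a

theorem LL_gen (a b : Idx) (hb : b ∈ Sset a) (m : ℕ) (hm : 1 ≤ m) :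
    q ^ m • EE q x0 x1 x2 x3 b ∈ LL q x0 x1 x2 x3 a := by
  obtain ⟨k, rfl⟩ := Nat.exists_eq_add_of_le' hm
  exact AddSubgroup.subset_closure ⟨b, hb, k, rfl⟩

theorem LL_map (a : Idx) (H : AddSubgroup R) (f : R →+ R)
    (h : ∀ b ∈ Sset a, ∀ m : ℕ, f (q ^ (m + 1) • EE q x0 x1 x2 x3 b) ∈ H) {y : R}
    (hy : y ∈ LL q x0 x1 x2 x3 a) : f y ∈ H := by
  have : LL q x0 x1 x2 x3 a ≤ H.comap f := by
    rw [LL, AddSubgroup.closure_le]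
    rintro _ ⟨b, hb, m, rfl⟩
    exact h b hb m
  exact this hy

/-- Abstract mapping principle. -/
theorem Tri_map (a : Idx) (H : AddSubgroup R) (f : R →+ R) (w : R) {x : R}
    (hx : Tri q x0 x1 x2 x3 a x)
    (h0 : f (EE q x0 x1 x2 x3 a) - w ∈ H)
    (h : ∀ b ∈ Sset a, ∀ m : ℕ, f (q ^ (m + 1) • EE q x0 x1 x2 x3 b) ∈ H) : f x - w ∈ H := by
  have h1 := LL_map a H f h hx
  rw [map_sub] at h1
  have := H.add_mem h1 h0
  rwa [sub_add_sub_cancel] at this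

def rmulHom (c : K) (y : R) : R →+ R where
  toFun x := c • (x * y)
  map_zero' := by simp
  map_add' a b := by simp [add_mul]

def lmulHom (c : K) (y : R) : R →+ R where
  toFun x := c • (y * x)
  map_zero' := by simp
  map_add' a b := by simp [mul_add]

theorem smul_inv_cancel (hq : q ≠ 0) (n k : ℕ) (h : k ≤ n) (x : R) :
    q ^ n • (q⁻¹) ^ k • x = q ^ (n - k) • x := by
  rw [smul_smul, inv_pow, ← div_eq_mul_inv, pow_sub₀ q hq h, div_eq_mul_inv]

theorem T0 (hq : q ≠ 0) (hr : Rels q x0 x1 x2 x3) (n : ℕ) {Z : R}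
    (hZ : Tri q x0 x1 x2 x3 (n, 0, 0, n) Z) :
    Tri q x0 x1 x2 x3 (n, 0, 0, n + 1) (q ^ n • (Z * x0)) := by
  refine Tri_map _ _ (rmulHom (q ^ n) x0) _ hZ ?_ ?_
  · simp only [rmulHom, AddMonoidHom.coe_mk, ZeroHom.coe_mk]
    rw [Ee_mul_u0 hq hr, smul_inv_cancel hq _ _ le_rfl]
    simp
  · rintro ⟨b3, b2, b1, b0⟩ ⟨⟨s, r, h1, h2, h3, h4⟩, hne⟩ m
    simp only [Prod.mk.injEq, ne_eq, not_and] at *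
    simp only [rmulHom, AddMonoidHom.coe_mk, ZeroHom.coe_mk, smul_mul_assoc]
    rw [Ee_mul_u0 hq hr, smul_comm (q ^ n), smul_inv_cancel hq _ _ (by omega), smul_smul, ← pow_add]
    refine LL_gen _ _ ⟨⟨s, r, ?_, ?_, ?_, ?_⟩, ?_⟩ _ (by omega) <;> simp <;> omega

theorem T3 (hq : q ≠ 0) (hr : Rels q x0 x1 x2 x3) (n : ℕ) {Z : R}
    (hZ : Tri q x0 x1 x2 x3 (n, 0, 0, n + 1) Z) :
    Tri q x0 x1 x2 x3 (n + 1, 0, 0, n + 1) (q ^ n • (x3 * Z)) := by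
  refine Tri_map _ _ (lmulHom (q ^ n) x3) _ hZ ?_ ?_
  · simp only [lmulHom, AddMonoidHom.coe_mk, ZeroHom.coe_mk]
    rw [u3_mul_Ee hq hr, smul_inv_cancel hq _ _ le_rfl]
    simp
  · rintro ⟨b3, b2, b1, b0⟩ ⟨⟨s, r, h1, h2, h3, h4⟩, hne⟩ m
    simp only [Prod.mk.injEq, ne_eq, not_and] at *
    simp only [lmulHom, AddMonoidHom.coe_mk, ZeroHom.coe_mk, mul_smul_comm]
    rw [u3_mul_Ee hq hr, smul_comm (q ^ n), smul_inv_cancel hq _ _ (by omega), smul_smul, ← pow_add]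
    refine LL_gen _ _ ⟨⟨s, r, ?_, ?_, ?_, ?_⟩, ?_⟩ _ (by omega) <;> simp <;> push_cast at * <;> omega

theorem T1 (hq : q ≠ 0) (hr : Rels q x0 x1 x2 x3) (n : ℕ) {Z : R}
    (hZ : Tri q x0 x1 x2 x3 (n, 1, 0, n + 1) Z) :
    q ^ (2 * n + 3) • (Z * x1) ∈ LL q x0 x1 x2 x3 (n + 1, 0, 0, n + 2) := by
  rw [← sub_zero (q ^ (2 * n + 3) • (Z * x1))]
  refine Tri_map _ _ (rmulHom (q ^ (2 * n + 3)) x1) _ hZ ?_ ?_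
  · simp only [rmulHom, AddMonoidHom.coe_mk, ZeroHom.coe_mk, sub_zero]
    rw [Ee_mul_u1 hq hr, smul_inv_cancel hq _ _ (by omega)]
    refine LL_gen _ _ ⟨⟨1, 1, ?_, ?_, ?_, ?_⟩, ?_⟩ _ (by omega) <;> simp <;> omega
  · rintro ⟨b3, b2, b1, b0⟩ ⟨⟨s, r, h1, h2, h3, h4⟩, hne⟩ m
    simp only [Prod.mk.injEq, ne_eq, not_and] at *
    simp only [rmulHom, AddMonoidHom.coe_mk, ZeroHom.coe_mk, smul_mul_assoc]
    rw [Ee_mul_u1 hq hr, smul_comm (q ^ _), smul_inv_cancel hq _ _ (by push_cast at *; omega), smul_smul, ← pow_add]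
    refine LL_gen _ _ ⟨⟨s + 1, r + 1, ?_, ?_, ?_, ?_⟩, ?_⟩ _ (by omega) <;> simp <;> push_cast at * <;> omega

theorem T2 (hq : q ≠ 0) (hr : Rels q x0 x1 x2 x3) (n : ℕ) {Z : R}
    (hZ : Tri q x0 x1 x2 x3 (n, 0, 1, n) Z) :
    q ^ (2 * n + 2) • (x2 * Z) ∈ LL q x0 x1 x2 x3 (n + 1, 0, 0, n + 1) := by
  rw [← sub_zero (q ^ (2 * n + 2) • (x2 * Z))]
  refine Tri_map _ _ (lmulHom (q ^ (2 * n + 2)) x2) _ hZ ?_ ?_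
  · simp only [lmulHom, AddMonoidHom.coe_mk, ZeroHom.coe_mk, sub_zero]
    rw [u2_mul_Ee hq hr, smul_inv_cancel hq _ _ (by omega)]
    refine LL_gen _ _ ⟨⟨1, 1, ?_, ?_, ?_, ?_⟩, ?_⟩ _ (by omega) <;> simp <;> omega
  · rintro ⟨b3, b2, b1, b0⟩ ⟨⟨s, r, h1, h2, h3, h4⟩, hne⟩ m
    simp only [Prod.mk.injEq, ne_eq, not_and] at *
    simp only [lmulHom, AddMonoidHom.coe_mk, ZeroHom.coe_mk, mul_smul_comm]
    rw [u2_mul_Ee hq hr, smul_comm (q ^ _), smul_inv_cancel hq _ _ (by push_cast at *; omega), smul_smul, ← pow_add]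
    refine LL_gen _ _ ⟨⟨s + 1, r + 1, ?_, ?_, ?_, ?_⟩, ?_⟩ _ (by omega) <;> simp <;> push_cast at * <;> omega

theorem Tp0 (hq : q ≠ 0) (hr : Rels q x0 x1 x2 x3) (n : ℕ) {Z : R}
    (hZ : Tri q x0 x1 x2 x3 (n, 0, 0, n) Z) :
    Tri q x0 x1 x2 x3 (n, 1, 0, n + 1) (q ^ (3 * n) • (Z * (x2 * x0 - q ^ 2 • x1 ^ 2))) := by
  refine Tri_map _ _ (rmulHom (q ^ (3 * n)) (x2 * x0 - q ^ 2 • x1 ^ 2)) _ hZ ?_ ?_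
  · simp only [rmulHom, AddMonoidHom.coe_mk, ZeroHom.coe_mk]
    rw [Ee_mul_p0 hq hr, smul_inv_cancel hq _ _ (by omega)]
    simp only [show 3 * n - (0 + 2 * 0 + 3 * n) = 0 by omega, pow_zero, one_smul, zero_add, sub_sub_cancel_left]
    apply neg_mem
    refine LL_gen _ _ ⟨⟨0, 1, ?_, ?_, ?_, ?_⟩, ?_⟩ _ (by omega) <;> simp
  · rintro ⟨b3, b2, b1, b0⟩ ⟨⟨s, r, h1, h2, h3, h4⟩, hne⟩ m
    simp only [Prod.mk.injEq, ne_eq, not_and] at *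
    simp only [rmulHom, AddMonoidHom.coe_mk, ZeroHom.coe_mk, smul_mul_assoc]
    rw [Ee_mul_p0 hq hr, smul_comm (q ^ _), smul_inv_cancel hq _ _ (by push_cast at *; omega), smul_smul, ← pow_add, smul_sub, smul_smul, ← pow_add]
    apply sub_mem
    · refine LL_gen _ _ ⟨⟨s, r, ?_, ?_, ?_, ?_⟩, ?_⟩ _ (by omega) <;> simp <;> push_cast at * <;> omega
    · refine LL_gen _ _ ⟨⟨s, r + 1, ?_, ?_, ?_, ?_⟩, ?_⟩ _ (by omega) <;> simp <;> push_cast at * <;> omega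

theorem Tp1 (hq : q ≠ 0) (hr : Rels q x0 x1 x2 x3) (n : ℕ) {Z : R}
    (hZ : Tri q x0 x1 x2 x3 (n, 0, 0, n + 1) Z) :
    Tri q x0 x1 x2 x3 (n + 1, 0, 1, n + 1) (q ^ (3 * n) • ((x3 * x1 - q ^ 2 • x2 ^ 2) * Z)) := by
  refine Tri_map _ _ (lmulHom (q ^ (3 * n)) (x3 * x1 - q ^ 2 • x2 ^ 2)) _ hZ ?_ ?_
  · simp only [lmulHom, AddMonoidHom.coe_mk, ZeroHom.coe_mk]
    rw [p1_mul_Ee hq hr, smul_inv_cancel hq _ _ (by omega)]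
    simp only [show 3 * n - (3 * n + 2 * 0 + 0) = 0 by omega, pow_zero, one_smul, zero_add, sub_sub_cancel_left]
    apply neg_mem
    refine LL_gen _ _ ⟨⟨1, 0, ?_, ?_, ?_, ?_⟩, ?_⟩ _ (by omega) <;> simp
  · rintro ⟨b3, b2, b1, b0⟩ ⟨⟨s, r, h1, h2, h3, h4⟩, hne⟩ m
    simp only [Prod.mk.injEq, ne_eq, not_and] at *
    simp only [lmulHom, AddMonoidHom.coe_mk, ZeroHom.coe_mk, mul_smul_comm]
    rw [p1_mul_Ee hq hr, smul_comm (q ^ _), smul_inv_cancel hq _ _ (by push_cast at *; omega), smul_smul, ← pow_add, smul_sub, smul_smul, ← pow_add]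
    apply sub_mem
    · refine LL_gen _ _ ⟨⟨s, r, ?_, ?_, ?_, ?_⟩, ?_⟩ _ (by omega) <;> simp <;> push_cast at * <;> omega
    · refine LL_gen _ _ ⟨⟨s + 1, r, ?_, ?_, ?_, ?_⟩, ?_⟩ _ (by omega) <;> simp <;> push_cast at * <;> omega

def zt (q : K) (x0 x1 x2 x3 : R) (n : ℕ) : R := q ^ (4 * n.choose 2) •
  zeta q (x2 * x0 - q ^ 2 • x1 ^ 2) (x3 * x1 - q ^ 2 • x2 ^ 2) (x3 * x0 - q ^ 2 • (x2 * x1)) n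

def xt (q : K) (x0 x1 x2 x3 : R) (n : ℕ) : R := q ^ (4 * n.choose 2 + n) •
  xi q x0 x1 (x2 * x0 - q ^ 2 • x1 ^ 2) (x3 * x1 - q ^ 2 • x2 ^ 2) (x3 * x0 - q ^ 2 • (x2 * x1)) n

def pt (q : K) (x0 x1 x2 x3 : R) (n : ℕ) : R := q ^ (3 * n) • (zt q x0 x1 x2 x3 n * (x2 * x0 - q ^ 2 • x1 ^ 2))

def wt (q : K) (x0 x1 x2 x3 : R) : ℕ → R
  | 0 => x1
  | n + 1 => q ^ (3 * n) • ((x3 * x1 - q ^ 2 • x2 ^ 2) * xt q x0 x1 x2 x3 n)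

theorem xt_succ (n : ℕ) : xt q x0 x1 x2 x3 (n + 1) = q ^ (n + 1) • (zt q x0 x1 x2 x3 (n + 1) * x0)
    - q ^ (2 * n + 3) • (pt q x0 x1 x2 x3 n * x1) := by
  simp only [xt, zt, pt, xi, smul_sub, smul_mul_assoc, smul_smul, ch2]
  match_scalars <;> ring

theorem zt_succ (hq : q ≠ 0) (hr : Rels q x0 x1 x2 x3) (n : ℕ) :
    zt q x0 x1 x2 x3 (n + 1) = q ^ n • (x3 * xt q x0 x1 x2 x3 n)
    - q ^ (2 * n + 2) • (x2 * wt q x0 x1 x2 x3 n) := by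
  have hf := hr.facts hq
  have := zeta_d hq hf (Rels.pp hq hf rfl) n
  rw [zt, this]
  cases n with
  | zero => simp [xt, wt, xi, wseq]
  | succ n =>
    simp only [xt, wt, wseq, smul_sub, smul_mul_assoc, mul_smul_comm, smul_smul, ch2]
    match_scalars <;> (simp only [pow_add, pow_mul, mul_add, pow_one, inv_pow]; field_simp; try ring)

theorem tri_all (hq : q ≠ 0) (hr : Rels q x0 x1 x2 x3) (n : ℕ) :
    Tri q x0 x1 x2 x3 (n, 0, 0, n) (zt q x0 x1 x2 x3 n) ∧
    Tri q x0 x1 x2 x3 (n, 0, 0, n + 1) (xt q x0 x1 x2 x3 n) ∧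
    Tri q x0 x1 x2 x3 (n, 0, 1, n) (wt q x0 x1 x2 x3 n) := by
  induction n with
  | zero =>
    refine ⟨?_, ?_, ?_⟩ <;>
    simp [Tri, zt, xt, wt, xi, zeta, EE, monR, bexp, zero_mem]
  | succ n ih =>
    obtain ⟨hz, hx, hw⟩ := ih
    have hz' : Tri q x0 x1 x2 x3 (n + 1, 0, 0, n + 1) (zt q x0 x1 x2 x3 (n + 1)) := by
      rw [zt_succ hq hr, Tri, sub_right_comm]
      exact sub_mem (T3 hq hr n hx) (T2 hq hr n hw)
    refine ⟨hz', ?_, Tp1 hq hr n hx⟩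
    rw [xt_succ, Tri, sub_right_comm]
    exact sub_mem (T0 hq hr (n + 1) hz') (T1 hq hr n (Tp0 hq hr n hz))

theorem tri_pt (hq : q ≠ 0) (hr : Rels q x0 x1 x2 x3) (n : ℕ) :
    Tri q x0 x1 x2 x3 (n, 1, 0, n + 1) (pt q x0 x1 x2 x3 n) := Tp0 hq hr n (tri_all hq hr n).1

end
section
variable {K R : Type*} [Field K] [Ring R] [Algebra K R] {q : K} {x0 x1 x2 x3 : R}

structure Sig (q : K) (x0 x1 x2 x3 : R) (bar : K →+* K) (σ : R → R) : Prop where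
  bq : bar q = q⁻¹
  add : ∀ x y, σ (x + y) = σ x + σ y
  mul : ∀ x y, σ (x * y) = σ y * σ x
  smul : ∀ (c : K) x, σ (c • x) = bar c • σ x
  s0 : σ x0 = x0
  s1 : σ x1 = q ^ 2 • x1
  s2 : σ x2 = q ^ 4 • x2
  s3 : σ x3 = q ^ 6 • x3

variable {bar : K →+* K} {σ : R → R}

theorem Sig.sub (h : Sig q x0 x1 x2 x3 bar σ) (x y : R) : σ (x - y) = σ x - σ y := by
  have : x - y = x + (-1 : K) • y := by rw [neg_one_smul, sub_eq_add_neg]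
  rw [this, h.add, h.smul, map_neg, map_one, neg_one_smul, sub_eq_add_neg]

theorem Sig.one (h : Sig q x0 x1 x2 x3 bar σ) (hs : Function.Surjective σ) : σ 1 = 1 := by
  obtain ⟨y, hy⟩ := hs 1
  have := h.mul y 1
  rw [mul_one, hy, mul_one] at this
  exact this.symm

theorem Sig.sz (hq : q ≠ 0) (hr : Rels q x0 x1 x2 x3) (h : Sig q x0 x1 x2 x3 bar σ) :
    σ (x3 * x0 - q ^ 2 • (x2 * x1)) = q ^ 4 • (x3 * x0 - q ^ 2 • (x2 * x1)) := by
  obtain ⟨h1, h2, h3, h4, h5, h6⟩ := hr.rules hq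
  rw [h.sub, h.smul, h.mul, h.mul, h.s0, h.s1, h.s2, h.s3, map_pow, h.bq]
  simp only [mul_smul_comm, smul_mul_assoc, h6, h2]
  match_scalars <;> (field_simp; try ring)

theorem Sig.sp0 (hq : q ≠ 0) (hr : Rels q x0 x1 x2 x3) (h : Sig q x0 x1 x2 x3 bar σ) :
    σ (x2 * x0 - q ^ 2 • x1 ^ 2) = q ^ 2 • (x2 * x0 - q ^ 2 • x1 ^ 2) := by
  obtain ⟨h1, h2, h3, h4, h5, h6⟩ := hr.rules hq
  rw [pow_two x1, h.sub, h.smul, h.mul, h.mul, h.s0, h.s1, h.s2, map_pow, h.bq]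
  simp only [mul_smul_comm, smul_mul_assoc, h4]
  match_scalars <;> (field_simp; try ring)

theorem Sig.sp1 (hq : q ≠ 0) (hr : Rels q x0 x1 x2 x3) (h : Sig q x0 x1 x2 x3 bar σ) :
    σ (x3 * x1 - q ^ 2 • x2 ^ 2) = q ^ 6 • (x3 * x1 - q ^ 2 • x2 ^ 2) := by
  obtain ⟨h1, h2, h3, h4, h5, h6⟩ := hr.rules hq
  rw [pow_two x2, h.sub, h.smul, h.mul, h.mul, h.s1, h.s2, h.s3, map_pow, h.bq]
  simp only [mul_smul_comm, smul_mul_assoc, h5]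
  match_scalars <;> (field_simp; try ring)

theorem Sig.szeta (hq : q ≠ 0) (h : Sig q x0 x1 x2 x3 bar σ) (hs : Function.Surjective σ)
    {a b c d p p' z : R} (hf : Facts q a b c d p p' z) (hpp : p' * p = q ^ 4 • (p * p'))
    (hp : σ p = q ^ 2 • p) (hp' : σ p' = q ^ 6 • p') (hz : σ z = q ^ 4 • z) (n : ℕ) :
    σ (zeta q p p' z n) = q ^ (4 * n) • zeta q p p' z n := by
  induction n using Nat.twoStepInduction with
  | zero => simp [zeta, h.one hs]
  | one => simpa [zeta] using hz
  | more n h1 h2 =>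
    rw [zeta_right hq hf n, ← zeta_right hq hf n, zeta, h.sub, h.smul, h.mul, h.mul, h.mul, h1, h2, hp, hp', hz,
      map_pow, h.bq, ← zeta, zeta_right hq hf n]
    simp only [mul_smul_comm, smul_mul_assoc, hpp, smul_sub, smul_smul]
    match_scalars <;> (simp only [pow_add, pow_mul, mul_add, pow_one, inv_pow]; field_simp; try ring)

theorem Sig.sxi (hq : q ≠ 0) (h : Sig q x0 x1 x2 x3 bar σ) (hs : Function.Surjective σ)
    {a b c d p p' z : R} (hf : Facts q a b c d p p' z) (hpp : p' * p = q ^ 4 • (p * p'))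
    (hp : σ p = q ^ 2 • p) (hp' : σ p' = q ^ 6 • p') (hz : σ z = q ^ 4 • z) 
    (ha : σ a = a) (hb : σ b = q ^ 2 • b) (n : ℕ) :
    σ (xi q a b p p' z n) = q ^ (2 * n) • xi q a b p p' z n := by
  have hze := h.szeta hq hs hf hpp hp hp' hz
  cases n with
  | zero => simp [xi, ha]
  | succ n =>
    conv_rhs => rw [xi_other hq hf hpp]
    rw [xi, h.sub, h.smul, h.mul, h.mul, h.mul, hze, hze, hp, hb, ha, map_pow, h.bq]
    simp only [mul_smul_comm, smul_mul_assoc, hpp, smul_sub, smul_smul, mul_assoc]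
    match_scalars <;> (simp only [pow_add, pow_mul, mul_add, pow_one, inv_pow]; field_simp; try ring)

theorem ch2_cast (n : ℕ) : (2 : ℤ) * (n.choose 2 : ℕ) = n * n - n := by
  induction n with
  | zero => simp
  | succ n ih => rw [ch2]; push_cast; linarith

theorem eig_zt (hq : q ≠ 0) (hr : Rels q x0 x1 x2 x3) (h : Sig q x0 x1 x2 x3 bar σ) (hs : Function.Surjective σ) (n : ℕ) :
    σ (zt q x0 x1 x2 x3 n) = q ^ (-Nnum (n, 0, 0, n)) • zt q x0 x1 x2 x3 n := by
  have hf := hr.facts hq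
  rw [zt, h.smul, h.szeta hq hs hf (Rels.pp hq hf rfl) (h.sp0 hq hr) (h.sp1 hq hr) (h.sz hq hr), smul_smul, smul_smul,
    map_pow, h.bq, inv_pow]
  congr 1
  simp only [← zpow_natCast, ← zpow_neg, ← zpow_add₀ hq]
  congr 1
  have := ch2_cast n
  simp only [Nnum]; push_cast
  linear_combination (-4) * this

theorem eig_xt (hq : q ≠ 0) (hr : Rels q x0 x1 x2 x3) (h : Sig q x0 x1 x2 x3 bar σ) (hs : Function.Surjective σ) (n : ℕ) :
    σ (xt q x0 x1 x2 x3 n) = q ^ (-Nnum (n, 0, 0, n + 1)) • xt q x0 x1 x2 x3 n := by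
  have hf := hr.facts hq
  rw [xt, h.smul, h.sxi hq hs hf (Rels.pp hq hf rfl) (h.sp0 hq hr) (h.sp1 hq hr) (h.sz hq hr) h.s0 h.s1, smul_smul, smul_smul,
    map_pow, h.bq, inv_pow]
  congr 1
  simp only [← zpow_natCast, ← zpow_neg, ← zpow_add₀ hq]
  congr 1
  have := ch2_cast n
  simp only [Nnum]; push_cast
  linear_combination (-4) * this

theorem eig_pt (hq : q ≠ 0) (hr : Rels q x0 x1 x2 x3) (h : Sig q x0 x1 x2 x3 bar σ) (hs : Function.Surjective σ) (n : ℕ) :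
    σ (pt q x0 x1 x2 x3 n) = q ^ (-Nnum (n, 1, 0, n + 1)) • pt q x0 x1 x2 x3 n := by
  have hf := hr.facts hq
  have e : q ^ (2 * n) • ((x2 * x0 - q ^ 2 • x1 ^ 2) * zt q x0 x1 x2 x3 n) = zt q x0 x1 x2 x3 n * (x2 * x0 - q ^ 2 • x1 ^ 2) := by
    rw [zt, smul_mul_assoc, p_zeta hq hf (Rels.pp hq hf rfl), mul_smul_comm, smul_comm]
  rw [pt, h.smul, h.mul, eig_zt hq hr h hs, h.sp0 hq hr, ← e, smul_mul_smul_comm, smul_smul, smul_smul, smul_smul,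
    map_pow, h.bq, inv_pow]
  congr 1
  simp only [← zpow_natCast, ← zpow_neg, ← zpow_add₀ hq]
  congr 1
  simp only [Nnum]; push_cast
  ring

theorem xt_other (hq : q ≠ 0) (hr : Rels q x0 x1 x2 x3) (n : ℕ) :
    xt q x0 x1 x2 x3 (n + 1) = q ^ (3 * n + 3) • (x0 * zt q x0 x1 x2 x3 (n + 1))
    - q ^ (2 * n + 1) • (x1 * pt q x0 x1 x2 x3 n) := by
  have hf := hr.facts hq
  rw [xt, xi_other hq hf (Rels.pp hq hf rfl), pt, zt, zt, smul_mul_assoc, p_zeta hq hf (Rels.pp hq hf rfl)]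
  simp only [mul_smul_comm, smul_mul_assoc, smul_smul, smul_sub, ch2, mul_assoc]
  match_scalars <;> ring

end
section
variable {K R : Type*} [Field K] [Ring R] [Algebra K R] {q : K} {x0 x1 x2 x3 : R}

theorem tri_trans {a b c : Idx} (h1 : tri a b) (h2 : tri b c) : tri a c := by
  obtain ⟨s, r, h⟩ := h1
  obtain ⟨s', r', h'⟩ := h2
  refine ⟨s + s', r + r', ?_⟩
  push_cast
  omega

def mu (a : Idx) : ℕ := a.1 + a.2.2.2

theorem mu_lt {a b : Idx} (h : b ∈ Sset a) : mu b < mu a := by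
  obtain ⟨⟨s, r, h1, h2, h3, h4⟩, hne⟩ := h
  have : ¬ (s = 0 ∧ r = 0) := by
    rintro ⟨rfl, rfl⟩
    apply hne
    obtain ⟨a3, a2, a1, a0⟩ := a
    obtain ⟨b3, b2, b1, b0⟩ := b
    simp at *
    omega
  simp only [mu]
  omega

theorem Sset_trans {a b c : Idx} (h1 : b ∈ Sset a) (h2 : c ∈ Sset b) : c ∈ Sset a := by
  refine ⟨tri_trans h1.1 h2.1, ?_⟩
  rintro rfl
  have := mu_lt h1
  have := mu_lt h2
  omega

theorem Nnum_tri {a b : Idx} (h : tri a b) : Nnum b = Nnum a := by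
  obtain ⟨s, r, h1, h2, h3, h4⟩ := h
  simp only [Nnum, h1, h2, h3, h4]
  ring

def VV (K : Type*) {R : Type*} [Field K] [Ring R] [Algebra K R] (E : Idx → R) (a : Idx) : Submodule K R := Submodule.span K (E '' Sset a)

theorem VV_mono (E : Idx → R) {a b : Idx} (h : b ∈ Sset a) : VV K E b ≤ VV K E a := by
  apply Submodule.span_mono
  apply Set.image_mono
  intro c hc
  exact Sset_trans h hc

theorem LL_le_VV (a : Idx) {y : R} (hy : y ∈ LL q x0 x1 x2 x3 a) : y ∈ VV K (EE q x0 x1 x2 x3) a := by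
  have : LL q x0 x1 x2 x3 a ≤ (VV K (EE q x0 x1 x2 x3) a).toAddSubgroup := by
    rw [LL, AddSubgroup.closure_le]
    rintro _ ⟨b, hb, m, rfl⟩
    exact Submodule.smul_mem _ _ (Submodule.subset_span ⟨b, hb, rfl⟩)
  exact this hy

variable {bar : K →+* K} {σ : R → R}

theorem sigma_span (h : Sig q x0 x1 x2 x3 bar σ) (B : Idx → R)
    (hB : ∀ a, Tri q x0 x1 x2 x3 a (B a)) (hBs : ∀ a, σ (B a) = q ^ (-Nnum a) • B a) :
    ∀ (k : ℕ) (c : Idx), mu c < k →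
      σ (EE q x0 x1 x2 x3 c) - q ^ (-Nnum c) • EE q x0 x1 x2 x3 c ∈ VV K (EE q x0 x1 x2 x3) c := by
  intro k
  induction k with
  | zero => intro c hc; omega
  | succ k ih =>
    intro c hc
    have hmap : ∀ y ∈ VV K (EE q x0 x1 x2 x3) c, σ y ∈ VV K (EE q x0 x1 x2 x3) c := by
      intro y hy
      induction hy using Submodule.span_induction with
      | mem y hy =>
        obtain ⟨b, hb, rfl⟩ := hy
        have h1 := VV_mono (K := K) (EE q x0 x1 x2 x3) hb (ih b (by have := mu_lt hb; omega))
        have h2 := Submodule.smul_mem _ (q ^ (-Nnum b)) (Submodule.subset_span (s := EE q x0 x1 x2 x3 '' Sset c) (R := K) ⟨b, hb, rfl⟩)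
        have := Submodule.add_mem _ h1 h2
        rwa [sub_add_cancel] at this
      | zero =>
        have := h.smul 0 0
        rw [smul_zero, map_zero, zero_smul] at this
        rw [this]; exact zero_mem _
      | add x y _ _ hx hy => rw [h.add]; exact add_mem hx hy
      | smul t x _ hx => rw [h.smul]; exact Submodule.smul_mem _ _ hx
    have hl := LL_le_VV c (hB c)
    have e : σ (EE q x0 x1 x2 x3 c) - q ^ (-Nnum c) • EE q x0 x1 x2 x3 c
        = q ^ (-Nnum c) • (B c - EE q x0 x1 x2 x3 c) - σ (B c - EE q x0 x1 x2 x3 c) := by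
      rw [h.sub, hBs, smul_sub]; abel
    rw [e]
    exact sub_mem (Submodule.smul_mem _ _ hl) (hmap _ hl)

theorem uniq (hq : q ≠ 0) (hLI : LinearIndependent K (EE q x0 x1 x2 x3)) (h : Sig q x0 x1 x2 x3 bar σ) (B : Idx → R)
    (hB : ∀ a, Tri q x0 x1 x2 x3 a (B a)) (hBs : ∀ a, σ (B a) = q ^ (-Nnum a) • B a)
    (hT : ∀ P : Polynomial ℤ, bar (q * Polynomial.eval₂ (Int.castRingHom K) q P) = q * Polynomial.eval₂ (Int.castRingHom K) q P →
      q * Polynomial.eval₂ (Int.castRingHom K) q P = 0) (a : Idx) (y : R) (hy : y ∈ LL q x0 x1 x2 x3 a)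
    (hys : σ y = q ^ (-Nnum a) • y) : y = 0 := by
  set E := EE q x0 x1 x2 x3 with hE
  obtain ⟨g, hg⟩ := LinearMap.exists_leftInverse_of_injective (Finsupp.linearCombination K E)
    (LinearMap.ker_eq_bot.mpr hLI)
  have hgE : ∀ f : Idx →₀ K, g (Finsupp.linearCombination K E f) = f := fun f => by
    rw [← LinearMap.comp_apply, hg, LinearMap.id_apply]
  have hgE1 : ∀ c, g (E c) = Finsupp.single c 1 := fun c => by
    rw [← hgE (Finsupp.single c 1), Finsupp.linearCombination_single, one_smul]
  obtain ⟨f, hf, rfl⟩ := (Finsupp.mem_span_image_iff_linearCombination K).1 (LL_le_VV a hy)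
  have hV : ∀ c b, b ∉ Sset c → ∀ v ∈ VV K E c, g v b = 0 := by
    intro c b hb v hv
    obtain ⟨f, hf, rfl⟩ := (Finsupp.mem_span_image_iff_linearCombination K).1 hv
    rw [hgE]
    by_contra hne
    exact hb (hf (Finsupp.mem_support_iff.mpr hne))
  by_contra hne
  have hfne : f ≠ 0 := by
    rintro rfl
    exact hne (map_zero _)
  obtain ⟨b, hb, hmax⟩ := Finset.exists_max_image f.support mu (Finsupp.support_nonempty_iff.mpr hfne)
  have hba : b ∈ Sset a := hf hb
  -- coefficient is in q Z[q]
  have hco : ∃ P : Polynomial ℤ, f b = q * Polynomial.eval₂ (Int.castRingHom K) q P := by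
    let ev : Polynomial ℤ →+ K := (AddMonoidHom.mulLeft q).comp (Polynomial.eval₂RingHom (Int.castRingHom K) q).toAddMonoidHom
    let co : R →+ K := ((Finsupp.applyAddHom b).comp g.toAddMonoidHom)
    have : LL q x0 x1 x2 x3 a ≤ ev.range.comap co := by
      rw [LL, AddSubgroup.closure_le]
      rintro _ ⟨c, hc, m, rfl⟩
      show co _ ∈ ev.range
      have e : co (q ^ (m + 1) • E c) = q ^ (m + 1) * (Finsupp.single c 1 : Idx →₀ K) b := by
        show g (q ^ (m + 1) • E c) b = _
        rw [map_smul, hgE1, Finsupp.smul_apply, smul_eq_mul]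
      rw [← hE, e]
      by_cases hcb : c = b
      · subst hcb
        refine ⟨Polynomial.X ^ m, ?_⟩
        show q * Polynomial.eval₂ (Int.castRingHom K) q (Polynomial.X ^ m) = _
        simp [pow_succ']
      · rw [Finsupp.single_eq_of_ne (Ne.symm hcb), mul_zero]; exact zero_mem _
    obtain ⟨P, hP⟩ := this hy
    refine ⟨P, ?_⟩
    have e2 : co (Finsupp.linearCombination K E f) = f b := by
      show g _ b = _
      rw [hgE]
    rw [← e2, ← hP]; rfl
  obtain ⟨P, hP⟩ := hco
  -- sigma coefficient
  let σh : R →+ R := AddMonoidHom.mk' σ h.add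
  have hsum : g (σ (Finsupp.linearCombination K E f)) b = bar (f b) * q ^ (-Nnum b) := by
    have e1 : σ (Finsupp.linearCombination K E f) = ∑ c ∈ f.support, bar (f c) • σ (E c) := by
      rw [Finsupp.linearCombination_apply, Finsupp.sum]
      show σh _ = _
      rw [map_sum]
      exact Finset.sum_congr rfl fun c _ => h.smul _ _
    rw [e1, map_sum, Finsupp.finset_sum_apply]
    have key : ∀ c ∈ f.support, g (bar (f c) • σ (E c)) b = bar (f c) * (q ^ (-Nnum c) * (Finsupp.single c 1 : Idx →₀ K) b) := by
      intro c hc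
      have hn : b ∉ Sset c := fun hbc => by
        have := mu_lt hbc
        have := hmax c hc
        omega
      have := hV c b hn _ (sigma_span h B hB hBs (mu c + 1) c (Nat.lt_succ_self _))
      rw [map_sub, Finsupp.sub_apply, sub_eq_zero, map_smul, ← hE, hgE1, Finsupp.smul_apply] at this
      rw [map_smul, Finsupp.smul_apply, this, smul_eq_mul, smul_eq_mul]
    rw [Finset.sum_congr rfl key, Finset.sum_eq_single b]
    · simp
    · intro c _ hcb
      rw [Finsupp.single_eq_of_ne (Ne.symm hcb)]; simp
    · intro hnb; exact absurd hb hnb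
  rw [hys, map_smul, hgE, Finsupp.smul_apply, smul_eq_mul, Nnum_tri hba.1, mul_comm] at hsum
  have hfb : f b = bar (f b) := mul_right_cancel₀ (zpow_ne_zero _ hq) hsum
  apply Finsupp.mem_support_iff.mp hb
  rw [hP] at hfb ⊢
  exact hT P hfb.symm

theorem uniq2 (hq : q ≠ 0) (hLI : LinearIndependent K (EE q x0 x1 x2 x3)) (h : Sig q x0 x1 x2 x3 bar σ) (B : Idx → R)
    (hB : ∀ a, Tri q x0 x1 x2 x3 a (B a)) (hBs : ∀ a, σ (B a) = q ^ (-Nnum a) • B a)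
    (hT : ∀ P : Polynomial ℤ, bar (q * Polynomial.eval₂ (Int.castRingHom K) q P) = q * Polynomial.eval₂ (Int.castRingHom K) q P →
      q * Polynomial.eval₂ (Int.castRingHom K) q P = 0) (a : Idx) (x : R) (hx : Tri q x0 x1 x2 x3 a x)
    (hxs : σ x = q ^ (-Nnum a) • x) : B a = x := by
  rw [← sub_eq_zero]
  refine uniq hq hLI h B hB hBs hT a _ ?_ ?_
  · have := sub_mem (hB a) hx
    rwa [sub_sub_sub_cancel_right] at this
  · rw [h.sub, hBs, hxs, smul_sub]

theorem LI_EE (hq : q ≠ 0) (hLI : LinearIndependent K (monR x0 x1 x2 x3)) :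
    LinearIndependent K (EE q x0 x1 x2 x3) :=
  hLI.units_smul (fun a => Units.mk0 (q ^ bexp a) (pow_ne_zero _ hq))

theorem tri_of_cond (a : Idx) (x : R) (φ : Idx →₀ Polynomial ℤ) (hφ : (↑φ.support : Set Idx) ⊆ Sset a)
    (hx : x - EE q x0 x1 x2 x3 a = φ.sum fun b p => (q * Polynomial.eval₂ (Int.castRingHom K) q p) • EE q x0 x1 x2 x3 b) :
    Tri q x0 x1 x2 x3 a x := by
  rw [Tri, hx]
  refine sum_mem fun b hb => ?_
  show (q * Polynomial.eval₂ (Int.castRingHom K) q (φ b)) • EE q x0 x1 x2 x3 b ∈ _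
  rw [Polynomial.eval₂_eq_sum, Polynomial.sum, Finset.mul_sum, Finset.sum_smul]
  refine sum_mem fun m _ => ?_
  have e : (q * ((Int.castRingHom K) ((φ b).coeff m) * q ^ m)) • EE q x0 x1 x2 x3 b
      = ((φ b).coeff m) • (q ^ (m + 1) • EE q x0 x1 x2 x3 b) := by
    rw [← Int.cast_smul_eq_zsmul K, smul_smul]
    congr 1
    rw [eq_intCast]; ring
  rw [e]
  exact AddSubgroup.zsmul_mem _ (LL_gen _ _ (hφ hb) _ (by omega)) _

end

theorem bar_fix (bar : F →+* F) (hbar : bar qq = qq⁻¹) (P : Polynomial ℤ)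
    (h : bar (qq * Polynomial.eval₂ (Int.castRingHom F) qq P) = qq * Polynomial.eval₂ (Int.castRingHom F) qq P) :
    qq * Polynomial.eval₂ (Int.castRingHom F) qq P = 0 := by
  have hq := qq_ne
  have hinj : Function.Injective (Polynomial.eval₂ (Int.castRingHom F) qq) := by
    have e : (Polynomial.eval₂ (Int.castRingHom F) qq) = fun P : Polynomial ℤ => algebraMap (Polynomial ℚ) F (P.map (Int.castRingHom ℚ)) := by
      have : Polynomial.eval₂RingHom (Int.castRingHom F) qq = (algebraMap (Polynomial ℚ) F).comp (Polynomial.mapRingHom (Int.castRingHom ℚ)) := by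
        apply Polynomial.ringHom_ext
        · intro n; simp
        · simp [qq]
      funext P
      exact congrArg (fun f : Polynomial ℤ →+* F => f P) this
    rw [e]
    intro P Q hPQ
    exact Polynomial.map_injective _ (RingHom.injective_int _) (RatFunc.algebraMap_injective ℚ hPQ)
  have h1 : bar (Polynomial.eval₂ (Int.castRingHom F) qq P) = Polynomial.eval₂ (Int.castRingHom F) qq⁻¹ P := by
    rw [Polynomial.hom_eval₂, hbar]
    congr 1
    exact RingHom.ext_int _ _
  rw [map_mul, hbar, h1] at h
  letI : Invertible (qq⁻¹) := invertibleOfNonzero (inv_ne_zero hq)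
  have h2 := Polynomial.eval₂_reverse_mul_pow (Int.castRingHom F) (qq⁻¹) P
  rw [invOf_eq_inv, inv_inv] at h2
  rw [← h2] at h
  have h3 : Polynomial.eval₂ (Int.castRingHom F) qq P.reverse
      = Polynomial.eval₂ (Int.castRingHom F) qq (Polynomial.X ^ (P.natDegree + 2) * P) := by
    rw [Polynomial.eval₂_mul, Polynomial.eval₂_X_pow, pow_add]
    rw [inv_pow] at h
    have hqd := pow_ne_zero P.natDegree hq
    field_simp at h
    linear_combination h
  have h4 := hinj h3
  by_cases hP : P = 0
  · simp [hP]
  · exfalso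
    have h5 := congrArg Polynomial.natDegree h4
    rw [Polynomial.natDegree_X_pow_mul _ hP] at h5
    have := Polynomial.reverse_natDegree_le P
    omega
theorem mon_eq : mon = monR us0 us1 us2 us3 := rfl

theorem Ee_eq (a : Idx) : Ee a = EE qq us0 us1 us2 us3 a := rfl

theorem sig_of (bar : F →+* F) (σ : Sgen → Sgen) (hσ : SigmaHyp bar σ) : Sig qq us0 us1 us2 us3 bar σ := by
  obtain ⟨h1, h2, h3, h4, h5, h6, h7, h8, h9⟩ := hσ
  exact ⟨h1, h3, h4, h5, h6, h7, h8, h9⟩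

theorem LI_of (hPBW : LinearIndependent F mon) : LinearIndependent F (EE qq us0 us1 us2 us3) := by
  rw [mon_eq] at hPBW
  exact LI_EE qq_ne hPBW

theorem tri_of (B : Idx → Sgen) (a : Idx) (h : cond1 B a) : Tri qq us0 us1 us2 us3 a (B a) := by
  obtain ⟨φ, hφ, e⟩ := h
  simp only [Ee_eq] at e
  exact tri_of_cond a (B a) φ hφ e

theorem stmt_aux (bar : F →+* F) (σ : Sgen → Sgen) (B : Idx → Sgen)
    (hPBW : LinearIndependent F mon) (hσ : SigmaHyp bar σ) (hB : DCB bar σ B) (a : Idx) (x : Sgen)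
    (hx : Tri qq us0 us1 us2 us3 a x) (hxs : σ x = qq ^ (-Nnum a) • x) : B a = x :=
  uniq2 qq_ne (LI_of hPBW) (sig_of bar σ hσ) B (fun a => tri_of B a (hB a).1) (fun a => (hB a).2) (bar_fix bar hσ.1) a x hx hxs

theorem Bz_nat (B : Idx → Sgen) (a b c d : ℕ) (a' b' c' d' : ℤ) (ha : a' = a) (hb : b' = b) (hc : c' = c) (hd : d' = d) :
    Bz B (a', b', c', d') = B (a, b, c, d) := by
  subst ha hb hc hd
  simp [Bz]

theorem base_case {K R : Type*} [Field K] [Ring R] [Algebra K R] (q : K) (x y : R) (m1 m2 m3 m4 : ℤ)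
    (h1 : m1 = 0) (h3 : m3 = 0) :
    x = q ^ m1 • (1 * x) - q ^ m2 • (0 * y) ∧ x = q ^ m3 • (x * 1) - q ^ m4 • (y * 0) := by
  subst h1 h3
  simp

/-- For every `n ≥ 1` the dual canonical basis elements satisfy
`B[n−1,0,0,n] = q^{n−1} B[n−1,0,0,n−1] u₀ − q^{2n−1} B[n−2,1,0,n−1] u₁`
`= q^{3n−3} u₀ B[n−1,0,0,n−1] − q^{2n−3} u₁ B[n−2,1,0,n−1]`. -/
theorem stmt11 (bar : F →+* F) (σ : Sgen → Sgen) (B : Idx → Sgen)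
    (hPBW : LinearIndependent F mon) (hσ : SigmaHyp bar σ) (hB : DCB bar σ B) (n : ℕ) (hn : 1 ≤ n) :
    Bz B ((n : ℤ) - 1, 0, 0, (n : ℤ))
        = qq ^ ((n : ℤ) - 1) • (Bz B ((n : ℤ) - 1, 0, 0, (n : ℤ) - 1) * us0)
          - qq ^ (2 * (n : ℤ) - 1) • (Bz B ((n : ℤ) - 2, 1, 0, (n : ℤ) - 1) * us1) ∧
    Bz B ((n : ℤ) - 1, 0, 0, (n : ℤ))
        = qq ^ (3 * (n : ℤ) - 3) • (us0 * Bz B ((n : ℤ) - 1, 0, 0, (n : ℤ) - 1))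
          - qq ^ (2 * (n : ℤ) - 3) • (us1 * Bz B ((n : ℤ) - 2, 1, 0, (n : ℤ) - 1)) := by
  have hs := sig_of bar σ hσ
  have hsurj : Function.Surjective σ := hσ.2.1.2
  have hr := relsS
  have hq := qq_ne
  have bz : ∀ m : ℕ, B (m, 0, 0, m) = zt qq us0 us1 us2 us3 m := fun m =>
    stmt_aux bar σ B hPBW hσ hB _ _ (tri_all hq hr m).1 (eig_zt hq hr hs hsurj m)
  have bx : ∀ m : ℕ, B (m, 0, 0, m + 1) = xt qq us0 us1 us2 us3 m := fun m =>
    stmt_aux bar σ B hPBW hσ hB _ _ (tri_all hq hr m).2.1 (eig_xt hq hr hs hsurj m)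
  have bp : ∀ m : ℕ, B (m, 1, 0, m + 1) = pt qq us0 us1 us2 us3 m := fun m =>
    stmt_aux bar σ B hPBW hσ hB _ _ (tri_pt hq hr m) (eig_pt hq hr hs hsurj m)
  obtain ⟨k, rfl⟩ := Nat.exists_eq_add_of_le' hn
  rw [Bz_nat B k 0 0 (k + 1) (((k + 1 : ℕ) : ℤ) - 1) 0 0 ((k + 1 : ℕ) : ℤ) (by push_cast; ring) rfl rfl rfl,
    Bz_nat B k 0 0 k (((k + 1 : ℕ) : ℤ) - 1) 0 0 (((k + 1 : ℕ) : ℤ) - 1) (by push_cast; ring) rfl rfl (by push_cast; ring), bx, bz]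
  cases k with
  | zero =>
    have e : Bz B (((0 + 1 : ℕ) : ℤ) - 2, 1, 0, ((0 + 1 : ℕ) : ℤ) - 1) = 0 := by
      simp [Bz]
    have hx : xt qq us0 us1 us2 us3 0 = us0 := by
      rw [xt, xi]; exact one_smul _ _
    have hz : zt qq us0 us1 us2 us3 0 = 1 := by
      rw [zt, zeta]; exact one_smul _ _
    rw [e, hx, hz]
    exact base_case qq us0 us1 _ _ _ _ (by norm_num) (by norm_num)
  | succ m =>
    rw [Bz_nat B m 1 0 (m + 1) (((m + 1 + 1 : ℕ) : ℤ) - 2) 1 0 (((m + 1 + 1 : ℕ) : ℤ) - 1) (by push_cast; ring) rfl rfl (by push_cast; ring), bp]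
    have e1 : (((m + 1 + 1 : ℕ) : ℤ) - 1) = ((m + 1 : ℕ) : ℤ) := by push_cast; ring
    have e2 : (2 * ((m + 1 + 1 : ℕ) : ℤ) - 1) = ((2 * m + 3 : ℕ) : ℤ) := by push_cast; ring
    have e3 : (3 * ((m + 1 + 1 : ℕ) : ℤ) - 3) = ((3 * m + 3 : ℕ) : ℤ) := by push_cast; ring
    have e4 : (2 * ((m + 1 + 1 : ℕ) : ℤ) - 3) = ((2 * m + 1 : ℕ) : ℤ) := by push_cast; ring
    rw [e1, e2, e3, e4, zpow_natCast, zpow_natCast, zpow_natCast, zpow_natCast]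
    exact ⟨xt_succ m, xt_other hq hr m⟩
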